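/- There is an absolute constant C > 0 such that the following holds. Fix d ≥ 10, let q be a probability distribution on [0,2π) invariant under the maps θ ↦ −θ and θ ↦ θ + π/2 (mod 2π), and let Q_T be the q-Kac walk of length T on ℝ^{d×d}. Let Σ be a uniformly random signed permutation matrix in SO(d), let ξ be a uniform random vector in {±1}^d conditioned on ∏_{i=1}^d ξ_i = 1, with Σ, ξ, and the walk mutually independent, and let D_ξ be the diagonal matrix with diagonal ξ. Assume d·exp(−T/(d−1)) < 1. Then the total variation distance between the law of Q_T and the law of Σ Q_T D_ξ is at most 2d·exp(−T/(d−1)) / (1 − d·exp(−T/(d−1))) + C ( d^{1/2} e^{−T/(6d)} + (d!)^{1/2} ((√5 − 1)/2)^{T/2} ). -/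

import Mathlib

noncomputable section

open MeasureTheory Real
open scoped ENNReal

namespace KacJL

instance matrixMeasurableSpace {m n : Type*} : MeasurableSpace (Matrix m n ℝ) :=
  inferInstanceAs (MeasurableSpace (m → n → ℝ))

/-- The rotation by angle `θ` in the `(i,j)` coordinate plane of `ℝ^d`. -/
def rotM (d : ℕ) (i j : Fin d) (θ : ℝ) : Matrix (Fin d) (Fin d) ℝ :=
  Matrix.of fun k l =>
    if k = i ∧ l = i then Real.cos θ
    else if k = i ∧ l = j then -Real.sin θ
    else if k = j ∧ l = i then Real.sin θ
    else if k = j ∧ l = j then Real.cos θ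
    else if k = l then 1 else 0

/-- The uniform distribution on pairs of distinct coordinates in `Fin d`. -/
def pairUniform (d : ℕ) : Measure (Fin d × Fin d) :=
  ((d * (d - 1) : ℕ) : ℝ≥0∞)⁻¹ •
    (Measure.count.restrict {p : Fin d × Fin d | p.1 ≠ p.2})

/-- The uniform distribution on `[0, 2π)`. -/
def angleUniform : Measure ℝ :=
  (ENNReal.ofReal (2 * Real.pi))⁻¹ • (volume.restrict (Set.Ico 0 (2 * Real.pi)))

/-- The distribution of the update variables of one step of the `q`-Kac walk. -/
def qKacParam (d : ℕ) (q : Measure ℝ) : Measure ((Fin d × Fin d) × ℝ) :=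
  (pairUniform d).prod q

/-- The product `R_{i_T,j_T,θ_T} ⋯ R_{i_1,j_1,θ_1}` of the rotations determined by the
update variables `ω`. -/
def kacMatrix {d T : ℕ} (ω : Fin T → (Fin d × Fin d) × ℝ) : Matrix (Fin d) (Fin d) ℝ :=
  ((List.ofFn fun t => rotM d (ω t).1.1 (ω t).1.2 (ω t).2).reverse).prod

/-- The law of the `q`-Kac walk of length `T` on `ℝ^d`. -/
def qKacMeasure (d T : ℕ) (q : Measure ℝ) : Measure (Matrix (Fin d) (Fin d) ℝ) :=
  Measure.map kacMatrix (Measure.pi fun _ : Fin T => qKacParam d q)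

/-- Reduction of a real number modulo `2π` to `[0, 2π)`. -/
def mod2pi (x : ℝ) : ℝ := 2 * Real.pi * Int.fract (x / (2 * Real.pi))

/-- The uniform distribution on sign vectors `ξ ∈ {±1}^d` conditioned on `∏ i ξ_i = 1`. -/
def signMeasure (d : ℕ) : Measure (Fin d → ℝ) :=
  ((2 ^ (d - 1) : ℕ) : ℝ≥0∞)⁻¹ •
    (Measure.count.restrict
      {v : Fin d → ℝ | (∀ i, v i = 1 ∨ v i = -1) ∧ ∏ i, v i = 1})

/-- The total variation distance between two measures. -/
def tvDist {α : Type*} [MeasurableSpace α] (μ ν : Measure α) : ℝ :=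
  ⨆ s : {s : Set α // MeasurableSet s}, |(μ s).toReal - (ν s).toReal|

/-- The uniform distribution on signed permutation matrices of determinant `1`
(i.e., signed permutation matrices in `SO(d)`). -/
def signedPermSO (d : ℕ) : Measure (Matrix (Fin d) (Fin d) ℝ) :=
  ((d.factorial * 2 ^ (d - 1) : ℕ) : ℝ≥0∞)⁻¹ •
    (Measure.count.restrict
      {M : Matrix (Fin d) (Fin d) ℝ |
        (∀ i j, M i j = 0 ∨ M i j = 1 ∨ M i j = -1) ∧
        (∃ σ : Equiv.Perm (Fin d), ∀ i j, M i j ≠ 0 ↔ σ j = i) ∧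
        M.det = 1})

/-!
Invariance of `q` under `θ ↦ -θ` makes the walk invariant under conjugation by signed permutation
matrices, and its invariance under half and quarter turns lets one insert in front of every
rotation, with probability `1 / 2` and independently, a further rotation by `π` or by `π / 2` in
the same plane. A half turn flips two signs; a quarter turn is a transposition up to signs.
Pulling the inserted signed permutations through the walk to its left end, the walk becomes
`A * Q_T`, where conditionally on the planes `A` is the product of a uniformly random subfamily
of the corresponding sign flips or transpositions.

For sign flips, `A` is exactly uniform on the even sign vectors as soon as the planes form a
connected graph on the coordinates, and a union bound over vertex sets controls the probability
that they do not. Once the signs have been averaged out, quarter turns act as transpositions, and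
the distance of `A` from uniform on the symmetric group is bounded in `L²` by the trace of the
`T`-th power of the lazy transposition walk. Functions of degree at most `p` form an invariant
subspace of dimension at most `(d.choose p) * d ^ p`, and on functions orthogonal to those of
degree less than `p` the eigenvalues are at most `degreeEigenvalue d p`; this bound comes from an
induction on the symmetric group with symmetrizers, in place of its character theory.
-/

section SubgroupSum

open Equiv Finset

variable {k G V : Type*} [CommSemiring k] [Group G] [AddCommMonoid V] [Module k V]
  (ρ : Representation k G V)

/-- The unnormalised projection `∑ h ∈ H, ρ h` onto the vectors fixed by the subgroup `H`. -/
def subgroupSum (H : Subgroup G) [Fintype H] : Module.End k V := ∑ h : H, ρ h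

variable {ρ} {H H' : Subgroup G} [Fintype H] [Fintype H']

lemma subgroupSum_apply (v : V) : subgroupSum ρ H v = ∑ h : H, ρ h v := by
  simp [subgroupSum]

lemma apply_subgroupSum {g : G} (hg : g ∈ H) (v : V) :
    ρ g (subgroupSum ρ H v) = subgroupSum ρ H v := by
  simp only [subgroupSum_apply, map_sum]
  exact Fintype.sum_equiv (Equiv.mulLeft ⟨g, hg⟩) _ _ fun h => by simp

lemma subgroupSum_apply_apply {g : G} (hg : g ∈ H) (v : V) :
    subgroupSum ρ H (ρ g v) = subgroupSum ρ H v := by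
  simp only [subgroupSum_apply]
  exact Fintype.sum_equiv (Equiv.mulRight ⟨g, hg⟩) _ _ fun h => by simp

lemma subgroupSum_apply_of_forall_apply_eq {v : V} (hv : ∀ g ∈ H, ρ g v = v) :
    subgroupSum ρ H v = Fintype.card H • v := by
  simp [subgroupSum_apply, fun h : H => hv h h.2]

lemma subgroupSum_subgroupSum_of_le (hH : H' ≤ H) (v : V) :
    subgroupSum ρ H (subgroupSum ρ H' v) = Fintype.card H' • subgroupSum ρ H v := by
  rw [subgroupSum_apply (H := H'), map_sum,
    Finset.sum_congr rfl fun h _ => subgroupSum_apply_apply (hH h.2) v]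
  simp

lemma commute_subgroupSum (hH : ∀ g ∈ H, ∀ g' ∈ H', Commute g g') :
    Commute (subgroupSum ρ H) (subgroupSum ρ H') :=
  Commute.sum_left _ _ _ fun h _ => Commute.sum_right _ _ _ fun h' _ =>
    (hH h h.2 h' h'.2).map ρ

end SubgroupSum

section SymmetricGroup

open Equiv Finset

variable {α : Type*}

/-- The permutations of `α` that move only elements of `A`. -/
def permsIn (A : Finset α) : Subgroup (Perm α) := fixingSubgroup (Perm α) (A : Set α)ᶜ

lemma mem_permsIn {A : Finset α} {g : Perm α} : g ∈ permsIn A ↔ ∀ x ∉ A, g x = x := by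
  simp [permsIn, mem_fixingSubgroup_iff]

lemma permsIn_mono {A B : Finset α} (h : A ⊆ B) : permsIn A ≤ permsIn B :=
  fixingSubgroup_antitone _ _ (by simpa using h)

lemma swap_mem_permsIn [DecidableEq α] {A : Finset α} {a b : α} (ha : a ∈ A) (hb : b ∈ A) :
    swap a b ∈ permsIn A :=
  mem_permsIn.2 fun _ hx =>
    swap_apply_of_ne_of_ne (ne_of_mem_of_not_mem ha hx).symm (ne_of_mem_of_not_mem hb hx).symm

lemma apply_mem_of_mem_permsIn {A : Finset α} {g : Perm α} (hg : g ∈ permsIn A) {x : α}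
    (hx : x ∈ A) : g x ∈ A := by
  by_contra h
  exact h (by rwa [g.injective (mem_permsIn.1 hg _ h)])

lemma commute_of_mem_permsIn {A B : Finset α} (h : Disjoint A B) {g g' : Perm α}
    (hg : g ∈ permsIn A) (hg' : g' ∈ permsIn B) : Commute g g' :=
  Perm.Disjoint.commute fun x => by
    by_cases hx : x ∈ A
    · exact .inr (mem_permsIn.1 hg' x (Finset.disjoint_left.1 h hx))
    · exact .inl (mem_permsIn.1 hg x hx)

lemma permsIn_eq_bot_of_card_le_one {A : Finset α} (hA : #A ≤ 1) : permsIn A = ⊥ := by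
  refine (Subgroup.eq_bot_iff_forall _).2 fun g hg => Perm.ext fun x => ?_
  by_cases hx : x ∈ A
  · exact Finset.card_le_one.1 hA _ (apply_mem_of_mem_permsIn hg hx) _ hx
  · exact mem_permsIn.1 hg x hx

lemma sum_comp_of_mem_permsIn {M : Type*} [AddCommMonoid M] {A : Finset α} {g : Perm α}
    (hg : g ∈ permsIn A) (f : α → M) : ∑ x ∈ A, f (g x) = ∑ x ∈ A, f x :=
  Finset.sum_equiv g
    (fun x => ⟨apply_mem_of_mem_permsIn hg, fun h => by
      simpa using apply_mem_of_mem_permsIn (inv_mem hg) h⟩) fun _ _ => rfl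

section permsIn

variable [Finite α] {k V : Type*} [Field k] [AddCommGroup V] [Module k V]
  {ρ : Representation k (Perm α) V} {A B : Finset α} {v : V}

instance fintypePermsIn (A : Finset α) : Fintype (permsIn A) := Fintype.ofFinite _

lemma subgroupSum_permsIn_of_card_le_one (hA : #A ≤ 1) :
    subgroupSum ρ (permsIn A) v = v := by
  have hbot : ∀ g ∈ permsIn A, g = 1 := by simp [permsIn_eq_bot_of_card_le_one hA]
  rw [subgroupSum_apply_of_forall_apply_eq fun g hg => by simp [hbot g hg]]
  have : Fintype.card (permsIn A) = 1 := by
    simp [permsIn_eq_bot_of_card_le_one hA]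
  simp [this]

lemma subgroupSum_permsIn_subgroupSum_eq_zero (h : Disjoint A B)
    (hB : subgroupSum ρ (permsIn B) v = 0) :
    subgroupSum ρ (permsIn B) (subgroupSum ρ (permsIn A) v) = 0 := by
  rw [← Module.End.mul_apply, ← (commute_subgroupSum fun g hg g' hg' =>
    commute_of_mem_permsIn h hg hg').eq, Module.End.mul_apply, hB, map_zero]

lemma exists_maximal_subgroupSum_ne_zero (hB : B.Nonempty) (hv : v ≠ 0) :
    ∃ A ⊆ B, A.Nonempty ∧ subgroupSum ρ (permsIn A) v ≠ 0 ∧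
      ∀ A' ⊆ B, #A < #A' → subgroupSum ρ (permsIn A') v = 0 := by
  classical
  obtain ⟨b, hb⟩ := hB
  have hne : {b} ∈ {A ∈ B.powerset | A.Nonempty ∧ subgroupSum ρ (permsIn A) v ≠ 0} := by
    simp [hb, subgroupSum_permsIn_of_card_le_one (A := {b}), hv]
  obtain ⟨A, hA, hmax⟩ := exists_max_image _ Finset.card ⟨_, hne⟩
  simp only [mem_filter, mem_powerset] at hA hmax
  refine ⟨A, hA.1, hA.2.1, hA.2.2, fun A' hA' hcard => by_contra fun hne' => ?_⟩
  exact (hmax A' ⟨hA', card_pos.1 (by lia), hne'⟩).not_gt hcard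

end permsIn

variable [DecidableEq α] {k V : Type*} [Field k] [AddCommGroup V] [Module k V]
  (ρ : Representation k (Perm α) V)

/-- The action of `∑ a ∈ B, ∑ b ∈ B, swap a b`. The diagonal terms are the identity, so this is
twice the class sum of transpositions of `B`, plus `#B`. -/
def transpositionSum (B : Finset α) : Module.End k V := ∑ a ∈ B, ∑ b ∈ B, ρ (swap a b)

variable {ρ} {A B : Finset α} {v w : V}

lemma transpositionSum_apply (B : Finset α) (v : V) :
    transpositionSum ρ B v = ∑ a ∈ B, ∑ b ∈ B, ρ (swap a b) v := by
  simp [transpositionSum]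

lemma commute_transpositionSum {g : Perm α} (hg : g ∈ permsIn B) :
    Commute (transpositionSum ρ B) (ρ g) := by
  refine LinearMap.ext fun v => ?_
  simp only [Module.End.mul_apply, transpositionSum_apply, map_sum]
  rw [← sum_comp_of_mem_permsIn hg]
  refine Finset.sum_congr rfl fun a _ => ?_
  rw [← sum_comp_of_mem_permsIn hg]
  refine Finset.sum_congr rfl fun b _ => ?_
  simp only [← Module.End.mul_apply, ← map_mul, Equiv.mul_swap_eq_swap_mul]

lemma apply_sum_swap_insert {i : α} (hw : ∀ g ∈ permsIn A, ρ g w = w)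
    {g : Perm α} (hg : g ∈ permsIn (insert i A)) :
    ρ g (∑ c ∈ insert i A, ρ (swap i c) w) = ∑ c ∈ insert i A, ρ (swap i c) w := by
  rw [map_sum]
  conv_rhs => rw [← sum_comp_of_mem_permsIn hg]
  refine Finset.sum_congr rfl fun c hc => ?_
  have hmem : swap i (g c) * g * swap i c ∈ permsIn A := by
    refine mem_permsIn.2 fun x hx => ?_
    by_cases hxi : x = i
    · simp [hxi]
    · refine mem_permsIn.1 (mul_mem (mul_mem (swap_mem_permsIn (mem_insert_self i A)
        (apply_mem_of_mem_permsIn hg hc)) hg) (swap_mem_permsIn (mem_insert_self i A) hc)) x ?_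
      simp [hx, hxi]
  nth_rw 2 [← hw _ hmem]
  simp only [← Module.End.mul_apply, ← map_mul, mul_assoc, swap_mul_self_mul]

variable [Finite α]

lemma commute_transpositionSum_subgroupSum (h : A ⊆ B) :
    Commute (transpositionSum ρ B) (subgroupSum ρ (permsIn A)) :=
  Commute.sum_right _ _ _ fun g _ => commute_transpositionSum (permsIn_mono h g.2)

variable [CharZero k]

/- The `swap i c` with `c ∈ insert i A` represent the cosets of `permsIn A` in
`permsIn (insert i A)`, so their sum averages `w` over the larger group. -/
lemma sum_apply_swap_eq_neg {i : α} (hi : i ∉ A) (hw : ∀ g ∈ permsIn A, ρ g w = w)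
    (h0 : subgroupSum ρ (permsIn (insert i A)) w = 0) :
    ∑ c ∈ A, ρ (swap i c) w = -w := by
  have hsum : subgroupSum ρ (permsIn (insert i A)) (∑ c ∈ insert i A, ρ (swap i c) w) = 0 := by
    rw [map_sum]
    refine Finset.sum_eq_zero fun c hc => ?_
    rw [subgroupSum_apply_apply (swap_mem_permsIn (mem_insert_self i A) hc), h0]
  rw [subgroupSum_apply_of_forall_apply_eq fun g hg => apply_sum_swap_insert hw hg,
    ← Nat.cast_smul_eq_nsmul k, smul_eq_zero_iff_right (by simp), sum_insert hi,
    swap_self] at hsum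
  rw [eq_neg_iff_add_eq_zero, add_comm, ← hsum]
  simp [← Perm.one_def]

lemma transpositionSum_sdiff_apply (hAB : A ⊆ B) (hw : ∀ g ∈ permsIn A, ρ g w = w)
    (h0 : ∀ i ∈ B \ A, subgroupSum ρ (permsIn (insert i A)) w = 0) :
    transpositionSum ρ (B \ A) w =
      transpositionSum ρ B w - ((#A : k) ^ 2 - 2 * #(B \ A)) • w := by
  have hAA : ∑ a ∈ A, ∑ b ∈ A, ρ (swap a b) w = (#A : k) ^ 2 • w := by
    rw [sum_congr rfl fun a ha => sum_congr rfl fun b hb => hw _ (swap_mem_permsIn ha hb)]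
    simp [← Nat.cast_smul_eq_nsmul k, smul_smul, sq]
  have hBA : ∑ a ∈ B \ A, ∑ b ∈ A, ρ (swap a b) w = -((#(B \ A) : k) • w) := by
    rw [sum_congr rfl fun a ha => sum_apply_swap_eq_neg (mem_sdiff.1 ha).2 hw (h0 a ha)]
    simp [← Nat.cast_smul_eq_nsmul k]
  have hAB' : ∑ a ∈ A, ∑ b ∈ B \ A, ρ (swap a b) w = -((#(B \ A) : k) • w) := by
    rw [sum_comm, ← hBA]
    simp only [swap_comm]
  simp only [transpositionSum_apply, ← sum_sdiff hAB, sum_add_distrib, hAA, hBA, hAB']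
  module

lemma hasEigenvector_transpositionSum_sdiff {ζ : k} (hAB : A ⊆ B)
    (hv : transpositionSum ρ B v = ζ • v) (hA : subgroupSum ρ (permsIn A) v ≠ 0)
    (h0 : ∀ A' ⊆ B, #A < #A' → subgroupSum ρ (permsIn A') v = 0) :
    (transpositionSum ρ (B \ A)).HasEigenvector (ζ - (#A : k) ^ 2 + 2 * #(B \ A))
      (subgroupSum ρ (permsIn A) v) := by
  refine ⟨Module.End.mem_eigenspace_iff.2 ?_, hA⟩
  rw [transpositionSum_sdiff_apply hAB fun g hg => apply_subgroupSum hg v]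
  · rw [← Module.End.mul_apply, (commute_transpositionSum_subgroupSum hAB).eq,
      Module.End.mul_apply, hv, map_smul]
    module
  · intro i hi
    rw [mem_sdiff] at hi
    rw [subgroupSum_subgroupSum_of_le (permsIn_mono (subset_insert i A)),
      h0 _ (insert_subset hi.1 hAB) (by simp [card_insert_of_notMem hi.2]), smul_zero]

end SymmetricGroup

section SymmetricGroupSpectrum

open Equiv Finset

lemma sub_mul_max_two_mul_anti {k : Type*} [Field k] [LinearOrder k]
    [IsStrictOrderedRing k] {n x y : k} (hxy : x ≤ y) (hy : y ≤ n) (hx : 0 ≤ x) :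
    (n - y) * max (2 * y) n ≤ (n - x) * max (2 * x) n := by
  rcases le_total (2 * y) n with h | h
  · rw [max_eq_right h, max_eq_right (by linarith)]
    nlinarith
  · rw [max_eq_left h]
    rcases max_cases (2 * x) n with ⟨h', _⟩ | ⟨h', _⟩ <;> rw [h'] <;> nlinarith

variable {α k V : Type*} [DecidableEq α] [Field k] [LinearOrder k] [IsStrictOrderedRing k]
  [AddCommGroup V] [Module k V] {ρ : Representation k (Perm α) V} {B : Finset α} {v : V} {ζ : k}
  {p : ℕ}

theorem eigenvalue_transpositionSum_le_card_mul [Finite α]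
    (hv : (transpositionSum ρ B).HasEigenvector ζ v)
    (h0 : ∀ A ⊆ B, p < #A → subgroupSum ρ (permsIn A) v = 0) : ζ ≤ #B * p := by
  induction B using Finset.strongInduction generalizing v ζ p with
  | H B ih =>
  rcases B.eq_empty_or_nonempty with rfl | hB
  · have := hv.apply_eq_smul
    simp_all [transpositionSum, eq_comm, hv.2]
  obtain ⟨A, hAB, hA, hne, hmax⟩ := exists_maximal_subgroupSum_ne_zero (ρ := ρ) hB hv.2
  have hAp : (#A : k) ≤ p := by
    exact_mod_cast not_lt.1 fun h => hne (h0 A hAB h)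
  have hle := ih (B \ A) (sdiff_ssubset hAB hA)
    (hasEigenvector_transpositionSum_sdiff hAB hv.apply_eq_smul hne hmax)
    fun A' hA' hcard => subgroupSum_permsIn_subgroupSum_eq_zero
      (disjoint_of_subset_left hA' sdiff_disjoint).symm (hmax A' (hA'.trans sdiff_subset) hcard)
  have hcard : (#(B \ A) : k) = #B - #A := by
    rw [card_sdiff_of_subset hAB, Nat.cast_sub (card_le_card hAB)]
  have hnonneg : (0 : k) ≤ #(B \ A) := Nat.cast_nonneg _
  rw [hcard] at hle hnonneg
  nlinarith [mul_le_mul_of_nonneg_left hAp (Nat.cast_nonneg #B : (0 : k) ≤ #B)]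

/-- In terms of Young diagrams, a vector killed by the symmetrizers of all sets with more than `p`
elements only involves shapes with first row at most `p`. -/
theorem eigenvalue_transpositionSum_univ_le [Fintype α] [Nonempty α]
    (hv : (transpositionSum ρ univ).HasEigenvector ζ v) (hp : p ≤ Fintype.card α)
    (h0 : ∀ A : Finset α, p < #A → subgroupSum ρ (permsIn A) v = 0) :
    ζ ≤ (Fintype.card α : k) ^ 2 -
      (Fintype.card α - p) * max (2 * (p : k)) (Fintype.card α) := by
  obtain ⟨A, -, -, hne, hmax⟩ :=
    exists_maximal_subgroupSum_ne_zero (ρ := ρ) univ_nonempty hv.2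
  have hAp : #A ≤ p := not_lt.1 fun h => hne (h0 A h)
  refine le_trans ?_ (sub_le_sub_left (sub_mul_max_two_mul_anti (Nat.cast_le.2 hAp)
    (Nat.cast_le.2 hp) (Nat.cast_nonneg _)) _)
  have hw := hasEigenvector_transpositionSum_sdiff (subset_univ A) hv.apply_eq_smul hne hmax
  have hle_card := eigenvalue_transpositionSum_le_card_mul (p := #(univ \ A)) hw
    fun A' hA' hcard => absurd (card_le_card hA') (by lia)
  have hle_mul := eigenvalue_transpositionSum_le_card_mul (p := #A) hw
    fun A' hA' hcard => subgroupSum_permsIn_subgroupSum_eq_zero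
      (disjoint_of_subset_left hA' sdiff_disjoint).symm (hmax A' (subset_univ _) hcard)
  have hcard : (#(univ \ A) : k) = Fintype.card α - #A := by
    rw [card_sdiff_of_subset (subset_univ A), card_univ, Nat.cast_sub (card_le_univ A)]
  rw [hcard] at hle_card hle_mul
  rcases max_cases (2 * (#A : k)) (Fintype.card α) with ⟨h, _⟩ | ⟨h, _⟩ <;> rw [h] <;> nlinarith

end SymmetricGroupSpectrum

section InnerProductSpace

open Module Finset
open scoped InnerProductSpace

variable {E : Type*} [NormedAddCommGroup E]

lemma exists_hasEigenvector_mem_orthogonal {𝕜 : Type*} [RCLike 𝕜] [InnerProductSpace 𝕜 E]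
    {A : End 𝕜 E} (hA : A.IsSymmetric) {I : Submodule 𝕜 E} [I.HasOrthogonalProjection]
    (hI : I ∈ End.invtSubmodule A) {μ : 𝕜} {v : E} (hv : A.HasEigenvector μ v) (hvI : v ∉ I) :
    ∃ z ∈ Iᗮ, A.HasEigenvector μ z := by
  obtain ⟨y, hy, z, hz, rfl⟩ := I.exists_add_mem_mem_orthogonal v
  have hAz : A z ∈ Iᗮ := (Submodule.mem_orthogonal _ _).2 fun u hu => by
    rw [← hA]
    exact Submodule.inner_right_of_mem_orthogonal (show A u ∈ I from hI hu) hz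
  have heq : A z - μ • z = μ • y - A y := by
    rw [sub_eq_sub_iff_add_eq_add, add_comm, ← map_add, hv.apply_eq_smul, smul_add, add_comm]
  have hmem : A z - μ • z ∈ I ⊓ Iᗮ :=
    ⟨heq ▸ I.sub_mem (I.smul_mem _ hy) (hI hy), Iᗮ.sub_mem hAz (Iᗮ.smul_mem _ hz)⟩
  rw [Submodule.inf_orthogonal_eq_bot, Submodule.mem_bot, sub_eq_zero] at hmem
  exact ⟨z, hz, End.mem_eigenspace_iff.2 hmem, fun h0 => hvI (by simpa [h0] using hy)⟩

variable [InnerProductSpace ℝ E]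

lemma trace_pow_le_sum_finrank_mul_pow [FiniteDimensional ℝ E] {A : End ℝ E} (hA : A.IsPositive)
    {V : ℕ → Submodule ℝ E} {κ : ℕ → ℝ} {n : ℕ} (hV : V n = ⊤) (hκ : ∀ j ≤ n, 0 ≤ κ j)
    (hAV : ∀ j ≤ n, ∀ μ v, A.HasEigenvector μ v → (∀ i < j, v ∉ V i) → μ ≤ κ j) (T : ℕ) :
    LinearMap.trace ℝ E (A ^ T) ≤ ∑ j ∈ range (n + 1), finrank ℝ (V j) * κ j ^ T := by
  classical
  set b := hA.isSymmetric.eigenvectorBasis rfl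
  set μ := hA.isSymmetric.eigenvalues rfl
  have hb (i) : A.HasEigenvector (μ i) (b i) := hA.isSymmetric.hasEigenvector_eigenvectorBasis rfl i
  have hex (i) : ∃ j, b i ∈ V j := ⟨n, hV ▸ Submodule.mem_top⟩
  set deg : Fin (finrank ℝ E) → ℕ := fun i => Nat.find (hex i)
  have hdeg (i) : deg i ≤ n := Nat.find_min' _ (hV ▸ Submodule.mem_top)
  have hcount (j) : #{i | deg i = j} ≤ finrank ℝ (V j) := by
    rw [← Fintype.card_subtype]
    have hmem (i : {i // deg i = j}) : b i ∈ V j := by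
      have := Nat.find_spec (hex i)
      rwa [show Nat.find (hex i) = j from i.2] at this
    have hli : LinearIndependent ℝ fun i : {i // deg i = j} => (⟨b i, hmem i⟩ : V j) :=
      .of_comp (V j).subtype (b.orthonormal.linearIndependent.comp _ Subtype.val_injective)
    exact hli.fintype_card_le_finrank
  calc LinearMap.trace ℝ E (A ^ T) = ∑ i, μ i ^ T := by
        simp [LinearMap.trace_eq_sum_inner _ b, (hb _).pow_apply, inner_smul_right]
    _ ≤ ∑ i, κ (deg i) ^ T := sum_le_sum fun i _ =>
        pow_le_pow_left₀ (hA.nonneg_eigenvalues rfl i)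
          (hAV _ (hdeg i) _ _ (hb i) fun _ => Nat.find_min (hex i)) T
    _ = ∑ j ∈ range (n + 1), ∑ i with deg i = j, κ (deg i) ^ T :=
        (sum_fiberwise_of_maps_to (fun i _ => mem_range.2 (Nat.lt_succ_of_le (hdeg i))) _).symm
    _ = ∑ j ∈ range (n + 1), #{i | deg i = j} * κ j ^ T := sum_congr rfl fun j _ => by
        rw [sum_congr rfl fun i hi => by rw [(mem_filter.1 hi).2], sum_const, nsmul_eq_mul]
    _ ≤ ∑ j ∈ range (n + 1), finrank ℝ (V j) * κ j ^ T := sum_le_sum fun j hj =>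
        mul_le_mul_of_nonneg_right (mod_cast hcount j)
          (pow_nonneg (hκ j (Nat.lt_succ_iff.1 (mem_range.1 hj))) T)

lemma sum_inner_pow_apply_of_commute {ι : Type*} {s : Finset ι} {P : ι → End ℝ E} {A : End ℝ E}
    {c : ℝ} (hA : A = c • ∑ i ∈ s, P i) (hP : ∀ i ∈ s, (P i).IsSymmetricProjection)
    (hAP : ∀ i ∈ s, Commute A (P i)) (T : ℕ) (u : E) :
    c * ∑ i ∈ s, ⟪(A ^ T) (P i u), P i u⟫_ℝ = ⟪(A ^ (T + 1)) u, u⟫_ℝ := by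
  have hterm : ∀ i ∈ s, ⟪(A ^ T) (P i u), P i u⟫_ℝ = ⟪(A ^ T) (P i u), u⟫_ℝ := fun i hi => by
    have hcomm := LinearMap.congr_fun ((hAP i hi).pow_left T).eq u
    have hidem := LinearMap.congr_fun (hP i hi).isIdempotentElem u
    simp only [End.mul_apply] at hcomm hidem
    rw [hcomm, (hP i hi).isSymmetric, hidem, ← (hP i hi).isSymmetric]
  rw [sum_congr rfl hterm, ← sum_inner, ← map_sum, ← LinearMap.sum_apply, pow_succ, End.mul_apply]
  nth_rw 3 [hA]
  rw [LinearMap.smul_apply, map_smul, real_inner_smul_left]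

lemma finrank_finset_sup_le {ι K W : Type*} [DivisionRing K] [AddCommGroup W] [Module K W]
    [FiniteDimensional K W] (s : Finset ι) (f : ι → Submodule K W) :
    finrank K (s.sup f : Submodule K W) ≤ ∑ i ∈ s, finrank K (f i) := by
  classical
  induction s using Finset.induction_on with
  | empty => simp
  | insert i s hi ih =>
    rw [sup_insert, sum_insert hi]
    exact (Submodule.finrank_add_le_finrank_add_finrank _ _).trans (by gcongr)

end InnerProductSpace

section RegularRepresentation

open Module Finset
open scoped InnerProductSpace

variable {G : Type*} [Group G]

variable (G) in
/-- The right regular representation of `G` on `ℝ^G`, acting by `(g • v) x = v (x * g)`. -/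
def rightRegular : Representation ℝ G (EuclideanSpace ℝ G) where
  toFun g :=
    { toFun := fun v => WithLp.toLp 2 fun x => v (x * g)
      map_add' := fun _ _ => rfl
      map_smul' := fun _ _ => rfl }
  map_one' := by ext; simp
  map_mul' g h := by
    ext v x
    exact congrArg v (mul_assoc x g h).symm

variable (G) in
/-- The left regular representation of `G` on `ℝ^G`, acting by `(g • v) x = v (g⁻¹ * x)`. -/
def leftRegular : Representation ℝ G (EuclideanSpace ℝ G) where
  toFun g :=
    { toFun := fun v => WithLp.toLp 2 fun x => v (g⁻¹ * x)
      map_add' := fun _ _ => rfl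
      map_smul' := fun _ _ => rfl }
  map_one' := by ext; simp
  map_mul' g h := by
    ext v x
    exact congrArg v (by group)

@[simp] lemma rightRegular_apply (g : G) (v : EuclideanSpace ℝ G) (x : G) :
    rightRegular G g v x = v (x * g) := rfl

@[simp] lemma leftRegular_apply (g : G) (v : EuclideanSpace ℝ G) (x : G) :
    leftRegular G g v x = v (g⁻¹ * x) := rfl

lemma commute_leftRegular_rightRegular (g h : G) :
    Commute (leftRegular G g) (rightRegular G h) := by
  ext v x
  simp [mul_assoc]

/-- Half of the time multiply on the right by `g`: the Markov operator of this random step. -/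
def lazyStep (g : G) : End ℝ (EuclideanSpace ℝ G) := (2 : ℝ)⁻¹ • (1 + rightRegular G g)

@[simp] lemma lazyStep_apply (g : G) (v : EuclideanSpace ℝ G) (x : G) :
    lazyStep g v x = 2⁻¹ * (v x + v (x * g)) := rfl

/-- The vectors of a representation of `G` that are fixed by the subgroup `H`. -/
def fixedSpace {k V : Type*} [CommRing k] [AddCommGroup V] [Module k V]
    (ρ : Representation k G V) (H : Subgroup G) : Submodule k V :=
  Representation.invariants (MonoidHom.comp ρ H.subtype)

lemma mem_fixedSpace {k V : Type*} [CommRing k] [AddCommGroup V] [Module k V]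
    {ρ : Representation k G V} {H : Subgroup G} {v : V} :
    v ∈ fixedSpace ρ H ↔ ∀ h ∈ H, ρ h v = v := by
  simp [fixedSpace]

lemma subgroupSum_eq_zero_of_mem_orthogonal {E : Type*} [NormedAddCommGroup E]
    [InnerProductSpace ℝ E] {ρ : Representation ℝ G E} {H : Subgroup G} [Fintype H]
    (hρ : ∀ g u v, ⟪ρ g u, ρ g v⟫_ℝ = ⟪u, v⟫_ℝ) {w : E}
    (hw : w ∈ (fixedSpace ρ H)ᗮ) : subgroupSum ρ H w = 0 := by
  have hmem : subgroupSum ρ H w ∈ fixedSpace ρ H :=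
    mem_fixedSpace.2 fun h hh => apply_subgroupSum hh w
  rw [← inner_self_eq_zero (𝕜 := ℝ)]
  nth_rw 1 [subgroupSum_apply]
  rw [sum_inner]
  refine sum_eq_zero fun h _ => ?_
  rw [← apply_subgroupSum h.2 w, hρ, Submodule.inner_left_of_mem_orthogonal hmem hw]

lemma finrank_fixedSpace_rightRegular_le_index [Finite G] (H : Subgroup G) :
    finrank ℝ (fixedSpace (rightRegular G) H) ≤ H.index := by
  have := Fintype.ofFinite (G ⧸ H)
  let f : fixedSpace (rightRegular G) H →ₗ[ℝ] (G ⧸ H → ℝ) :=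
    { toFun := fun v q => v.1 q.out
      map_add' := fun _ _ => rfl
      map_smul' := fun _ _ => rfl }
  have hf : Function.Injective f := fun u v huv => by
    refine Subtype.ext (PiLp.ext fun x => ?_)
    obtain ⟨h, hh⟩ := QuotientGroup.mk_out_eq_mul H x
    have hfix (w : fixedSpace (rightRegular G) H) : w.1 (x * h) = w.1 x :=
      congr($(mem_fixedSpace.1 w.2 h h.2) x)
    have hout : u.1 (x : G ⧸ H).out = v.1 (x : G ⧸ H).out := congrFun huv x
    rwa [hh, hfix, hfix] at hout
  refine (LinearMap.finrank_le_finrank_of_injective hf).trans_eq ?_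
  rw [finrank_fintype_fun_eq_card, Subgroup.index, Nat.card_eq_fintype_card]

variable [Fintype G]

lemma inner_rightRegular (g : G) (u v : EuclideanSpace ℝ G) :
    ⟪rightRegular G g u, rightRegular G g v⟫_ℝ = ⟪u, v⟫_ℝ := by
  simp only [PiLp.inner_apply, rightRegular_apply]
  exact Equiv.sum_comp (Equiv.mulRight g) fun x => ⟪u x, v x⟫_ℝ

lemma isSymmetricProjection_lazyStep {g : G} (hg : g * g = 1) :
    (lazyStep g).IsSymmetricProjection where
  isIdempotentElem := by
    ext v x
    simp only [End.mul_apply, lazyStep_apply, mul_assoc, hg, mul_one]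
    ring
  isSymmetric u v := by
    have h : ⟪rightRegular G g u, v⟫_ℝ = ⟪u, rightRegular G g v⟫_ℝ := by
      rw [← inner_rightRegular g, ← End.mul_apply, ← map_mul, hg, map_one, End.one_apply]
    simp [lazyStep, inner_smul_left, inner_smul_right, inner_add_left, inner_add_right, h]

lemma card_mul_apply_single_one_eq_trace [DecidableEq G] {A : End ℝ (EuclideanSpace ℝ G)}
    (hA : ∀ g, Commute A (leftRegular G g)) :
    Fintype.card G * A (EuclideanSpace.single 1 1) 1 = LinearMap.trace ℝ _ A := by
  have hsingle (g : G) : leftRegular G g (EuclideanSpace.single 1 1) =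
      EuclideanSpace.single g (1 : ℝ) := by
    ext x
    simp [inv_mul_eq_one, eq_comm]
  have hterm (g : G) : A (EuclideanSpace.single g 1) g = A (EuclideanSpace.single 1 1) 1 := by
    have := congr($((hA g).eq) (EuclideanSpace.single 1 1) g)
    simpa [hsingle] using this
  rw [LinearMap.trace_eq_sum_inner A (EuclideanSpace.basisFun G ℝ)]
  simp [EuclideanSpace.inner_single_left, hterm]

end RegularRepresentation

section LazyTranspositionWalk

open Module Finset Equiv
open scoped InnerProductSpace

section DegreeSpace

variable {α : Type*} [Fintype α] [DecidableEq α]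

variable (α) in
/-- The span of the indicators of the events `σ b₁ = x₁, …, σ bⱼ = xⱼ`, encoded as the sum of the
spaces of functions of `σ` that only depend on the restriction of `σ` to some `j`-element set. -/
def degreeSpace (j : ℕ) : Submodule ℝ (EuclideanSpace ℝ (Perm α)) :=
  (powersetCard j univ).sup fun B => fixedSpace (rightRegular (Perm α)) (permsIn Bᶜ)

lemma fixedSpace_permsIn_compl_le_degreeSpace {B : Finset α} {j : ℕ} (hB : #B = j) :
    fixedSpace (rightRegular (Perm α)) (permsIn Bᶜ) ≤ degreeSpace α j :=
  le_sup (f := fun B => fixedSpace (rightRegular (Perm α)) (permsIn Bᶜ))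
    (mem_powersetCard.2 ⟨subset_univ B, hB⟩)

lemma degreeSpace_card : degreeSpace α (Fintype.card α) = ⊤ := by
  refine eq_top_iff.2 (le_trans (fun v _ => mem_fixedSpace.2 fun g hg => ?_)
    (fixedSpace_permsIn_compl_le_degreeSpace card_univ))
  rw [permsIn_eq_bot_of_card_le_one (by simp), Subgroup.mem_bot] at hg
  simp [hg]

lemma index_permsIn_compl_le (B : Finset α) :
    (permsIn Bᶜ).index ≤ Fintype.card α ^ #B := by
  have hstab : permsIn Bᶜ = MulAction.stabilizer (Perm α) (Subtype.val : B → α) := by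
    ext g
    simp [mem_permsIn, MulAction.mem_stabilizer_iff, funext_iff]
  rw [hstab, MulAction.index_stabilizer]
  calc (MulAction.orbit (Perm α) (Subtype.val : B → α)).ncard
      ≤ Nat.card (B → α) := Set.ncard_le_card _
    _ = Fintype.card α ^ #B := by simp

lemma finrank_degreeSpace_le (j : ℕ) :
    finrank ℝ (degreeSpace α j) ≤ (Fintype.card α).choose j * Fintype.card α ^ j := by
  refine (finrank_finset_sup_le _ _).trans ((sum_le_card_nsmul _ _ (Fintype.card α ^ j)
    fun B hB => ?_).trans_eq (by simp))
  rw [← (mem_powersetCard.1 hB).2]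
  exact (finrank_fixedSpace_rightRegular_le_index _).trans (index_permsIn_compl_le B)

lemma subgroupSum_eq_zero_of_mem_degreeSpace_orthogonal {j : ℕ} {A : Finset α}
    {v : EuclideanSpace ℝ (Perm α)} (hv : v ∈ (degreeSpace α j)ᗮ) (hA : Fintype.card α ≤ #A + j)
    (hj : j ≤ Fintype.card α) :
    subgroupSum (rightRegular (Perm α)) (permsIn A) v = 0 := by
  obtain ⟨A', hA', hcard⟩ := exists_subset_card_eq (n := Fintype.card α - j) (s := A) (by lia)
  have hv' : subgroupSum (rightRegular (Perm α)) (permsIn A') v = 0 := by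
    refine subgroupSum_eq_zero_of_mem_orthogonal inner_rightRegular
      (Submodule.orthogonal_le ?_ hv)
    rw [← compl_compl A']
    exact fixedSpace_permsIn_compl_le_degreeSpace (by rw [card_compl]; lia)
  have hsum := subgroupSum_subgroupSum_of_le (ρ := rightRegular (Perm α)) (permsIn_mono hA') v
  rw [hv', map_zero, eq_comm, ← Nat.cast_smul_eq_nsmul ℝ] at hsum
  exact (smul_eq_zero_iff_right (by simp)).1 hsum

lemma degreeSpace_mem_invtSubmodule {K : End ℝ (EuclideanSpace ℝ (Perm α))}
    (hK : ∀ g, Commute K (rightRegular (Perm α) g)) (j : ℕ) :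
    degreeSpace α j ∈ End.invtSubmodule K := by
  refine (End.mem_invtSubmodule K).2 (Finset.sup_le fun B hB v hv => ?_)
  refine fixedSpace_permsIn_compl_le_degreeSpace (mem_powersetCard.1 hB).2
    (mem_fixedSpace.2 fun g hg => ?_)
  rw [← End.mul_apply, ← (hK g).eq, End.mul_apply, mem_fixedSpace.1 hv g hg]

end DegreeSpace

variable (α : Type*) [Fintype α] [DecidableEq α]

/-- The Markov operator of the lazy random transposition walk on `Perm α`. -/
def lazyTranspositionWalk : End ℝ (EuclideanSpace ℝ (Perm α)) :=
  (#(univ : Finset α).offDiag : ℝ)⁻¹ • ∑ p ∈ univ.offDiag, lazyStep (swap p.1 p.2)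

/-- The bound on the eigenvalues of `lazyTranspositionWalk` of degree `j`, where `n = card α`. -/
def degreeEigenvalue (n j : ℕ) : ℝ := 1 - j * max (2 * (n - j : ℝ)) n / (2 * n ^ 2)

lemma degreeEigenvalue_nonneg {n j : ℕ} (hj : j ≤ n) : 0 ≤ degreeEigenvalue n j := by
  have hj' : (j : ℝ) ≤ n := Nat.cast_le.2 hj
  refine sub_nonneg.2 (div_le_one_of_le₀ ?_ (by positivity))
  rcases max_cases (2 * (n - j : ℝ)) n with ⟨h, _⟩ | ⟨h, _⟩ <;> rw [h]
  · nlinarith [sq_nonneg (n - j : ℝ), sq_nonneg (j : ℝ)]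
  · nlinarith

lemma sum_offDiag_lazyStep_swap :
    ∑ p ∈ (univ : Finset α).offDiag, lazyStep (swap p.1 p.2) =
      (2 : ℝ)⁻¹ • (transpositionSum (rightRegular (Perm α)) univ +
        ((Fintype.card α : ℝ) * (Fintype.card α - 2)) • 1) := by
  have hoff : ((#(univ : Finset α).offDiag : ℕ) : ℝ) =
      Fintype.card α * Fintype.card α - Fintype.card α := by
    rw [offDiag_card, card_univ, Nat.cast_sub (Nat.le_mul_self _), Nat.cast_mul]
  have hsum : transpositionSum (rightRegular (Perm α)) univ =
      ∑ p ∈ (univ : Finset α).offDiag, rightRegular (Perm α) (swap p.1 p.2) +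
        (Fintype.card α : ℝ) • 1 := by
    rw [transpositionSum, ← sum_product', ← diag_union_offDiag, sum_union (disjoint_diag_offDiag _),
      add_comm, sum_diag]
    simp [← Perm.one_def, ← Nat.cast_smul_eq_nsmul ℝ]
  simp only [lazyStep, ← smul_sum, sum_add_distrib, sum_const, hsum,
    ← Nat.cast_smul_eq_nsmul ℝ, hoff]
  module

variable {α}

lemma commute_lazyTranspositionWalk_rightRegular (g : Perm α) :
    Commute (lazyTranspositionWalk α) (rightRegular (Perm α) g) := by
  rw [lazyTranspositionWalk, sum_offDiag_lazyStep_swap]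
  exact (((commute_transpositionSum (mem_permsIn.2 (by simp))).add_left
    ((Commute.one_left _).smul_left _)).smul_left _).smul_left _

lemma commute_lazyTranspositionWalk_lazyStep (g : Perm α) :
    Commute (lazyTranspositionWalk α) (lazyStep g) :=
  ((Commute.one_right _).add_right (commute_lazyTranspositionWalk_rightRegular g)).smul_right _

lemma commute_lazyTranspositionWalk_leftRegular (g : Perm α) :
    Commute (lazyTranspositionWalk α) (leftRegular (Perm α) g) :=
  (Commute.sum_left _ _ _ fun _ _ => ((Commute.one_left _).add_left
    (commute_leftRegular_rightRegular _ _).symm).smul_left _).smul_left _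

lemma isPositive_lazyTranspositionWalk : (lazyTranspositionWalk α).IsPositive :=
  (sum_induction _ LinearMap.IsPositive (fun _ _ => .add) LinearMap.isPositive_zero fun _ _ =>
    (isSymmetricProjection_lazyStep (swap_mul_self _ _)).isPositive).smul_of_nonneg (by positivity)

variable [Nontrivial α]

lemma hasEigenvector_transpositionSum_univ {μ : ℝ} {v : EuclideanSpace ℝ (Perm α)}
    (hv : (lazyTranspositionWalk α).HasEigenvector μ v) :
    (transpositionSum (rightRegular (Perm α)) univ).HasEigenvector
      (2 * (Fintype.card α * (Fintype.card α - 1)) * μ - Fintype.card α * (Fintype.card α - 2))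
      v := by
  have hcard : (1 : ℝ) < Fintype.card α := mod_cast Fintype.one_lt_card
  refine ⟨End.mem_eigenspace_iff.2 ?_, hv.2⟩
  have hoff : (#(univ : Finset α).offDiag : ℝ) = Fintype.card α * (Fintype.card α - 1) := by
    rw [offDiag_card, card_univ, Nat.cast_sub (Nat.le_mul_self _), Nat.cast_mul]
    ring
  have hsum : (2 : ℝ)⁻¹ • (transpositionSum (rightRegular (Perm α)) univ v +
      ((Fintype.card α : ℝ) * (Fintype.card α - 2)) • v) =
        ((Fintype.card α : ℝ) * (Fintype.card α - 1) * μ) • v := by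
    have hv' := hv.apply_eq_smul
    rw [lazyTranspositionWalk, sum_offDiag_lazyStep_swap, hoff, LinearMap.smul_apply,
      inv_smul_eq_iff₀ (mul_pos (by linarith) (by linarith)).ne', smul_smul] at hv'
    exact hv'
  rw [inv_smul_eq_iff₀ two_ne_zero, ← eq_sub_iff_add_eq] at hsum
  rw [hsum]
  module

lemma eigenvalue_lazyTranspositionWalk_le_of_transpositionSum {n j : ℕ} (hn : 1 < n) {μ : ℝ}
    (h : 2 * (n * (n - 1)) * μ - n * (n - 2) ≤ (n : ℝ) ^ 2 - j * max (2 * (n - j : ℝ)) n) :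
    μ ≤ degreeEigenvalue n j := by
  have hn' : (1 : ℝ) < n := Nat.one_lt_cast.2 hn
  have hpos : 0 < 2 * (n * (n - 1) : ℝ) := by nlinarith
  calc μ ≤ 1 - j * max (2 * (n - j : ℝ)) n / (2 * (n * (n - 1))) := by
        rw [le_sub_iff_add_le, ← le_sub_iff_add_le', div_le_iff₀ hpos]
        linarith
    _ ≤ degreeEigenvalue n j := by
        rw [degreeEigenvalue]
        gcongr
        nlinarith

lemma eigenvalue_lazyTranspositionWalk_le {j : ℕ} (hj : j ≤ Fintype.card α) {μ : ℝ}
    {v : EuclideanSpace ℝ (Perm α)} (hv : (lazyTranspositionWalk α).HasEigenvector μ v)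
    (hvj : ∀ i < j, v ∉ degreeSpace α i) : μ ≤ degreeEigenvalue (Fintype.card α) j := by
  obtain ⟨z, hz, hz0⟩ : ∃ z, (lazyTranspositionWalk α).HasEigenvector μ z ∧
      ∀ A : Finset α, Fintype.card α - j < #A →
        subgroupSum (rightRegular (Perm α)) (permsIn A) z = 0 := by
    rcases j with _ | i
    · exact ⟨v, hv, fun A hA => absurd (card_le_univ A) (by lia)⟩
    · obtain ⟨z, hzi, hz⟩ := exists_hasEigenvector_mem_orthogonal
        isPositive_lazyTranspositionWalk.isSymmetric
        (degreeSpace_mem_invtSubmodule commute_lazyTranspositionWalk_rightRegular i) hv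
        (hvj i i.lt_succ_self)
      exact ⟨z, hz, fun A hA =>
        subgroupSum_eq_zero_of_mem_degreeSpace_orthogonal hzi (by lia) (by lia)⟩
  have hle := eigenvalue_transpositionSum_univ_le (hasEigenvector_transpositionSum_univ hz)
    (Nat.sub_le _ j) hz0
  rw [Nat.cast_sub hj, sub_sub_cancel] at hle
  exact eigenvalue_lazyTranspositionWalk_le_of_transpositionSum Fintype.one_lt_card hle

theorem lazyTranspositionWalk_pow_apply_one_le (T : ℕ) :
    (Fintype.card α).factorial *
        ((lazyTranspositionWalk α ^ T) (EuclideanSpace.single 1 1)) 1 ≤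
      ∑ j ∈ range (Fintype.card α + 1),
        ((Fintype.card α).choose j * Fintype.card α ^ j : ℝ) *
          degreeEigenvalue (Fintype.card α) j ^ T := by
  rw [← Fintype.card_perm, card_mul_apply_single_one_eq_trace fun g =>
    (commute_lazyTranspositionWalk_leftRegular g).pow_left T]
  refine (trace_pow_le_sum_finrank_mul_pow isPositive_lazyTranspositionWalk degreeSpace_card
    (fun _ => degreeEigenvalue_nonneg) (fun _ hj _ _ => eigenvalue_lazyTranspositionWalk_le hj)
    T).trans (sum_le_sum fun j hj => ?_)
  have := degreeEigenvalue_nonneg (mem_range_succ_iff.1 hj)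
  gcongr
  exact_mod_cast finrank_degreeSpace_le j

end LazyTranspositionWalk

section EigenvalueSum

open Finset

lemma two_mul_log_sub_log_le {x n : ℝ} (hx : 1 ≤ x) (hxn : x ≤ n) :
    2 * log n - log x ≤ 2 + 3 / 2 * log n * (max (2 * (n - x)) n / n) := by
  have hn : 0 < n := by linarith
  have hlog : 0 ≤ log n := log_nonneg (hx.trans hxn)
  have hlog' : 0 ≤ log x := log_nonneg hx
  rcases le_total (3 * x) n with h | h
  · have hmax : 4 / 3 ≤ max (2 * (n - x)) n / n := by
      rw [le_div_iff₀ hn]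
      exact le_max_of_le_left (by linarith)
    nlinarith
  · have hmax : 1 ≤ max (2 * (n - x)) n / n := by
      rw [le_div_iff₀ hn, one_mul]
      exact le_max_right _ _
    have hlog_three : log n ≤ log 3 + log x := by
      rw [← log_mul (by norm_num) (by positivity)]
      exact log_le_log hn h
    have := log_le_sub_one_of_pos (zero_lt_three (α := ℝ))
    nlinarith

lemma choose_mul_pow_le_exp {n j : ℕ} (hn : n ≠ 0) (hj : j ≠ 0) :
    (n.choose j * n ^ j : ℝ) ≤ exp (j * (2 * log n - log j + 1)) := by
  have hn' : (0 : ℝ) < n := by positivity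
  have hj' : (0 : ℝ) < j := by positivity
  calc (n.choose j * n ^ j : ℝ) ≤ n ^ j / j.factorial * n ^ j := by
        gcongr
        exact Nat.choose_le_pow_div j n
    _ = (n * n / j) ^ j * ((j : ℝ) ^ j / j.factorial) := by
        rw [div_pow, mul_pow]
        field_simp
    _ ≤ (n * n / j) ^ j * exp j := by
        gcongr
        exact pow_div_factorial_le_exp j hj'.le j
    _ = exp (j * (2 * log n - log j + 1)) := by
        rw [mul_add_one, exp_add, exp_nat_mul, exp_sub, two_mul, exp_add, exp_log hn', exp_log hj']

lemma choose_mul_pow_mul_degreeEigenvalue_pow_le {n j T : ℕ} (hj : j ≠ 0) (hjn : j ≤ n)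
    (hT : 0 ≤ T / n - 3 * log n) :
    n.choose j * n ^ j * degreeEigenvalue n j ^ T ≤ exp (3 - (T / n - 3 * log n) / 2) ^ j := by
  have hn : n ≠ 0 := by lia
  have hn' : (0 : ℝ) < n := by positivity
  set m : ℝ := max (2 * (n - j : ℝ)) n / n with hm
  have hm1 : 1 ≤ m := by
    rw [hm, le_div_iff₀ hn', one_mul]
    exact le_max_right _ _
  have heig : degreeEigenvalue n j ^ T ≤ exp (T * -(j * (m / (2 * n)))) := by
    rw [exp_nat_mul]
    refine pow_le_pow_left₀ (degreeEigenvalue_nonneg hjn) ((one_sub_le_exp_neg _).trans_eq' ?_) T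
    rw [degreeEigenvalue, hm]
    field_simp
  have hlog := two_mul_log_sub_log_le (Nat.one_le_cast.2 (Nat.one_le_iff_ne_zero.2 hj))
    (Nat.cast_le (α := ℝ).2 hjn)
  rw [← hm] at hlog
  calc n.choose j * n ^ j * degreeEigenvalue n j ^ T
      ≤ exp (j * (2 * log n - log j + 1)) * exp (T * -(j * (m / (2 * n)))) := by
        gcongr
        · exact pow_nonneg (degreeEigenvalue_nonneg hjn) T
        · exact choose_mul_pow_le_exp hn hj
    _ = exp (j * (2 * log n - log j + 1 - T / n * m / 2)) := by
        rw [← exp_add]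
        congr 1
        field_simp
        ring
    _ ≤ exp (j * (3 - (T / n - 3 * log n) / 2)) := by
        refine exp_le_exp.2 (mul_le_mul_of_nonneg_left ?_ (Nat.cast_nonneg j))
        nlinarith [mul_le_mul_of_nonneg_left hm1 hT]
    _ = exp (3 - (T / n - 3 * log n) / 2) ^ j := exp_nat_mul _ _

lemma sum_choose_mul_pow_mul_degreeEigenvalue_pow_le {n T : ℕ} (hn : n ≠ 0)
    (hT : 24 ≤ T / n - 3 * log n) :
    ∑ j ∈ range (n + 1), (n.choose j * n ^ j : ℝ) * degreeEigenvalue n j ^ T ≤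
      1 + n * exp (-T / (3 * n)) := by
  set r := exp (3 - (T / n - 3 * log n) / 2) with hr
  have hr2 : r ≤ 2⁻¹ := by
    rw [hr, ← exp_log (show (0 : ℝ) < 2⁻¹ by norm_num), log_inv, exp_le_exp]
    linarith [log_two_lt_d9]
  calc ∑ j ∈ range (n + 1), (n.choose j * n ^ j : ℝ) * degreeEigenvalue n j ^ T
      ≤ ∑ j ∈ range n, r ^ (j + 1) + 1 := by
        rw [sum_range_succ']
        refine add_le_add (sum_le_sum fun j hj =>
          choose_mul_pow_mul_degreeEigenvalue_pow_le j.succ_ne_zero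
            (Nat.succ_le_of_lt (mem_range.1 hj)) (by linarith)) (by simp [degreeEigenvalue])
    _ ≤ r * (1 - r)⁻¹ + 1 := by
        simp only [pow_succ', ← mul_sum]
        gcongr
        rw [← tsum_geometric_of_lt_one (exp_nonneg _) (by linarith)]
        exact (summable_geometric_of_lt_one (exp_nonneg _) (by linarith)).sum_le_tsum _
          fun _ _ => by positivity
    _ ≤ r * exp 1 + 1 := by
        gcongr
        rw [inv_le_comm₀ (by linarith) (exp_pos 1)]
        have := inv_anti₀ two_pos (show (2 : ℝ) ≤ exp 1 by linarith [exp_one_gt_d9])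
        linarith
    _ ≤ 1 + n * exp (-T / (3 * n)) := by
        have hexp : n * exp (-T / (3 * n)) = exp (log n - T / n / 3) := by
          rw [sub_eq_add_neg, exp_add, exp_log (by positivity)]
          congr 2
          ring
        rw [add_comm, hr, ← exp_add, hexp]
        gcongr
        linarith

end EigenvalueSum

section SubproductLaw

open Finset Module
open scoped BigOperators InnerProductSpace

section Group

variable {G : Type*} [Group G]

lemma sum_lazyStep_mul_of_mul_right_invariant [Fintype G] {g : G} {φ : G → ℝ}
    (hφ : ∀ x, φ (x * g) = φ x)
    (v : EuclideanSpace ℝ G) : ∑ x, lazyStep g v x * φ x = ∑ x, v x * φ x := by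
  have hshift : ∑ x, v (x * g) * φ x = ∑ x, v x * φ x := by
    simpa only [Equiv.coe_mulRight, hφ] using
      Equiv.sum_comp (Equiv.mulRight g) fun x => v x * φ x
  simp only [lazyStep_apply, mul_assoc, add_mul, ← mul_sum, sum_add_distrib, hshift]
  ring

variable [DecidableEq G]

/-- The law of the random subproduct `g₀ ^ ε₀ * g₁ ^ ε₁ * ⋯` with independent fair bits `εₜ`. -/
def subproductLaw : ∀ {T : ℕ}, (Fin T → G) → EuclideanSpace ℝ G
  | 0, _ => EuclideanSpace.single 1 1
  | T + 1, g => lazyStep (g (Fin.last T)) (subproductLaw fun t => g t.castSucc)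

lemma subproductLaw_zero (g : Fin 0 → G) : subproductLaw g = EuclideanSpace.single 1 1 := rfl

lemma subproductLaw_succ {T : ℕ} (g : Fin (T + 1) → G) :
    subproductLaw g = lazyStep (g (Fin.last T)) (subproductLaw fun t => g t.castSucc) := rfl

lemma subproductLaw_nonneg {T : ℕ} (g : Fin T → G) (x : G) : 0 ≤ subproductLaw g x := by
  induction T generalizing x with
  | zero =>
    rw [subproductLaw_zero, PiLp.single_apply]
    positivity
  | succ T ih =>
    rw [subproductLaw_succ, lazyStep_apply]
    have := ih (fun t => g t.castSucc) x
    have := ih (fun t => g t.castSucc) (x * g (Fin.last T))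
    positivity

lemma sum_subproductLaw [Fintype G] {T : ℕ} (g : Fin T → G) : ∑ x, subproductLaw g x = 1 := by
  induction T with
  | zero => simp [subproductLaw_zero]
  | succ T ih =>
    have := sum_lazyStep_mul_of_mul_right_invariant (φ := 1) (g := g (Fin.last T))
      (fun _ => rfl) (subproductLaw fun t => g t.castSucc)
    simpa [subproductLaw_succ g, ih] using this

end Group

section CommGroup

variable {G : Type*} [CommGroup G] [DecidableEq G] {T : ℕ} {g : Fin T → G}

lemma subproductLaw_mul_right (hg : ∀ t, g t * g t = 1) (t : Fin T) (x : G) :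
    subproductLaw g (x * g t) = subproductLaw g x := by
  induction T generalizing x with
  | zero => exact t.elim0
  | succ T ih =>
    simp only [subproductLaw_succ, lazyStep_apply]
    refine Fin.lastCases ?_ (fun t => ?_) t
    · rw [mul_assoc, hg, mul_one, add_comm]
    · have hinit := ih (g := fun t => g t.castSucc) (fun t => hg t.castSucc) t
      rw [hinit, mul_right_comm, hinit]

lemma subproductLaw_apply_of_closure_eq_top [Fintype G] (hg : ∀ t, g t * g t = 1)
    (htop : Subgroup.closure (Set.range g) = ⊤) (x : G) :
    subproductLaw g x = (Fintype.card G : ℝ)⁻¹ := by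
  have hconst (x : G) : ∀ y, subproductLaw g (y * x) = subproductLaw g y := by
    induction (htop ▸ Subgroup.mem_top x : x ∈ Subgroup.closure (Set.range g)) using
      Subgroup.closure_induction with
    | mem _ h =>
      obtain ⟨t, rfl⟩ := h
      exact subproductLaw_mul_right hg t
    | one => simp
    | mul a b _ _ ha hb => exact fun y => by rw [← mul_assoc, hb, ha]
    | inv a _ ha => exact fun y => by rw [← ha, inv_mul_cancel_right]
  have hone (y : G) : subproductLaw g y = subproductLaw g 1 := by rw [← hconst y 1, one_mul]
  have hsum := sum_subproductLaw g
  simp only [hone, sum_const, card_univ, nsmul_eq_mul] at hsum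
  rw [hone x, eq_inv_of_mul_eq_one_right hsum]

end CommGroup

variable {ι : Type*} [Fintype ι] [Nonempty ι] {v : EuclideanSpace ℝ ι}

lemma card_mul_sum_sub_inv_sq (hv : ∑ i, v i = 1) :
    Fintype.card ι * ∑ i, (v i - (Fintype.card ι : ℝ)⁻¹) ^ 2 = Fintype.card ι * ⟪v, v⟫_ℝ - 1 := by
  have hcard : ∑ _ : ι, (Fintype.card ι : ℝ)⁻¹ ^ 2 = (Fintype.card ι : ℝ)⁻¹ := by
    rw [sum_const, card_univ, nsmul_eq_mul, sq, mul_inv_cancel_left₀ (by simp)]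
  rw [real_inner_self_eq_norm_sq, EuclideanSpace.real_norm_sq_eq]
  simp only [sub_sq, sum_add_distrib, sum_sub_distrib, ← sum_mul, ← mul_sum, hv, hcard]
  field_simp
  ring

lemma one_le_card_mul_inner_self (hv : ∑ i, v i = 1) : 1 ≤ Fintype.card ι * ⟪v, v⟫_ℝ := by
  rw [← sub_nonneg, ← card_mul_sum_sub_inv_sq hv]
  positivity

lemma abs_sum_mul_sub_expect_le (hv : ∑ i, v i = 1) {φ : ι → ℝ} (hφ : ∀ i, φ i ∈ Set.Icc 0 1) :
    |∑ i, v i * φ i - 𝔼 i, φ i| ≤ √(Fintype.card ι * ⟪v, v⟫_ℝ - 1) := by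
  have hL1 : |∑ i, v i * φ i - 𝔼 i, φ i| ≤ ∑ i, |v i - (Fintype.card ι : ℝ)⁻¹| := by
    rw [Fintype.expect_eq_sum_div_card, div_eq_inv_mul, mul_sum, ← sum_sub_distrib]
    refine (abs_sum_le_sum_abs _ _).trans (sum_le_sum fun i _ => ?_)
    rw [← sub_mul, abs_mul, abs_of_nonneg (hφ i).1]
    exact mul_le_of_le_one_right (abs_nonneg _) (hφ i).2
  refine hL1.trans (Real.le_sqrt_of_sq_le ?_)
  rw [← card_mul_sum_sub_inv_sq hv]
  simpa only [sq_abs, card_univ] using sq_sum_le_card_mul_sum_sq (s := univ)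
    (f := fun i => |v i - (Fintype.card ι : ℝ)⁻¹|)

end SubproductLaw

section FiniteMeasureSpaces

open Finset ProbabilityTheory
open scoped BigOperators

variable {Ω : Type*} [MeasurableSpace Ω] [MeasurableSingletonClass Ω]

lemma inv_natCast_smul_count_restrict_eq_uniformOn {s : Set Ω} {n : ℕ} (hs : s.Finite)
    (hn : s.ncard = n) : (n : ℝ≥0∞)⁻¹ • Measure.count.restrict s = uniformOn s := by
  rw [uniformOn, ProbabilityTheory.cond, Measure.count_apply_finite s hs,
    ← Set.ncard_eq_toFinset_card s hs, hn]

lemma integral_uniformOn_finset (s : Finset Ω) (f : Ω → ℝ) :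
    ∫ x, f x ∂uniformOn (s : Set Ω) = 𝔼 x ∈ s, f x := by
  have hf : IntegrableOn f s Measure.count := by
    rw [← (s : Set Ω).biUnion_of_singleton]
    simp [integrableOn_finset_iUnion]
  rw [uniformOn, ProbabilityTheory.cond, integral_smul_measure, setIntegral_finset s hf,
    expect_eq_sum_div_card]
  simp [Measure.real, div_eq_inv_mul]

lemma integral_uniformOn_range {ι : Type*} [Fintype ι] {φ : ι → Ω} (hφ : Function.Injective φ)
    (f : Ω → ℝ) : ∫ x, f x ∂uniformOn (Set.range φ) = 𝔼 i, f (φ i) := by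
  classical
  rw [← Set.image_univ, ← coe_univ, ← coe_image, integral_uniformOn_finset,
    expect_image hφ.injOn]

end FiniteMeasureSpaces

section Prefix

variable {X : Type*} [MeasurableSpace X] (μ : Measure X) [IsProbabilityMeasure μ] (T : ℕ)

lemma measurePreserving_init_last :
    MeasurePreserving (fun ω : Fin (T + 1) → X => (fun t : Fin T => ω t.castSucc, ω (Fin.last T)))
      (Measure.pi fun _ => μ) ((Measure.pi fun _ => μ).prod μ) := by
  have := Measure.measurePreserving_swap.comp
    (measurePreserving_piFinSuccAbove (fun _ : Fin (T + 1) => μ) (Fin.last T))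
  convert this using 1
  ext1 ω
  simp only [Function.comp_apply, MeasurableEquiv.piFinSuccAbove_apply, Fin.insertNthEquiv_last]
  rfl

lemma integral_pi_succ {f : (Fin T → X) × X → ℝ}
    (hf : Integrable f ((Measure.pi fun _ => μ).prod μ)) :
    ∫ ω, f (fun t => ω t.castSucc, ω (Fin.last T)) ∂Measure.pi (fun _ : Fin (T + 1) => μ) =
      ∫ ω, ∫ x, f (ω, x) ∂μ ∂Measure.pi (fun _ : Fin T => μ) := by
  rw [← integral_prod f hf, ← (measurePreserving_init_last μ T).map_eq,
    integral_map (measurePreserving_init_last μ T).aemeasurable]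
  rw [(measurePreserving_init_last μ T).map_eq]
  exact hf.aestronglyMeasurable

end Prefix

section PairUniform

open Finset Module ProbabilityTheory Equiv
open scoped BigOperators InnerProductSpace

variable {d : ℕ}

lemma pairUniform_eq_uniformOn :
    pairUniform d = uniformOn ((univ : Finset (Fin d)).offDiag : Set (Fin d × Fin d)) := by
  rw [← inv_natCast_smul_count_restrict_eq_uniformOn (finite_toSet _)
    (Set.ncard_coe_finset _), pairUniform, offDiag_card, card_univ, Fintype.card_fin, Nat.mul_sub,
    mul_one]
  congr 2
  ext p
  simp

lemma integral_pairUniform (f : Fin d × Fin d → ℝ) :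
    ∫ p, f p ∂pairUniform d = 𝔼 p ∈ univ.offDiag, f p := by
  rw [pairUniform_eq_uniformOn, integral_uniformOn_finset]

lemma ae_pairUniform_ne : ∀ᵐ p ∂pairUniform d, p.1 ≠ p.2 :=
  Measure.ae_smul_measure (ae_restrict_mem (Set.toFinite _).measurableSet) _

variable [Nontrivial (Fin d)]

instance : IsProbabilityMeasure (pairUniform d) := by
  rw [pairUniform_eq_uniformOn]
  exact isProbabilityMeasure_uniformOn (finite_toSet _)
    (by rw [coe_offDiag, coe_univ]; exact Set.nontrivial_univ.offDiag_nonempty)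

lemma integral_inner_pow_subproductLaw_swap (s T : ℕ) :
    ∫ f, ⟪(lazyTranspositionWalk (Fin d) ^ s) (subproductLaw fun t => swap (f t).1 (f t).2),
        subproductLaw fun t => swap (f t).1 (f t).2⟫_ℝ
      ∂Measure.pi (fun _ : Fin T => pairUniform d) =
    ((lazyTranspositionWalk (Fin d) ^ (s + T)) (EuclideanSpace.single 1 1)) 1 := by
  induction T generalizing s with
  | zero => simp [subproductLaw_zero, EuclideanSpace.inner_single_right]
  | succ T ih =>
    have hstep (u : EuclideanSpace ℝ (Perm (Fin d))) :
        ∫ p, ⟪(lazyTranspositionWalk (Fin d) ^ s) (lazyStep (swap p.1 p.2) u),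
          lazyStep (swap p.1 p.2) u⟫_ℝ ∂pairUniform d =
        ⟪(lazyTranspositionWalk (Fin d) ^ (s + 1)) u, u⟫_ℝ := by
      rw [integral_pairUniform, expect_eq_sum_div_card, div_eq_inv_mul]
      exact sum_inner_pow_apply_of_commute (by rw [lazyTranspositionWalk])
        (fun _ _ => isSymmetricProjection_lazyStep (swap_mul_self _ _))
        (fun _ _ => commute_lazyTranspositionWalk_lazyStep _) s u
    simp only [subproductLaw_succ]
    rw [integral_pi_succ (pairUniform d) T (f := fun z =>
      ⟪(lazyTranspositionWalk (Fin d) ^ s) (lazyStep (swap z.2.1 z.2.2)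
        (subproductLaw fun t => swap (z.1 t).1 (z.1 t).2)), lazyStep (swap z.2.1 z.2.2)
        (subproductLaw fun t => swap (z.1 t).1 (z.1 t).2)⟫_ℝ) .of_finite]
    simp only [hstep]
    rw [ih, add_assoc, add_comm 1]

theorem integral_sqrt_subproductLaw_swap_le {T : ℕ} (hT : 24 ≤ (T : ℝ) / d - 3 * log d) :
    ∫ f, √(d.factorial * ⟪subproductLaw fun t => swap (f t).1 (f t).2,
        subproductLaw fun t => swap (f t).1 (f t).2⟫_ℝ - 1)
      ∂Measure.pi (fun _ : Fin T => pairUniform d) ≤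
    (d : ℝ) ^ ((1 : ℝ) / 2) * exp (-(T : ℝ) / (6 * d)) := by
  have hd : d ≠ 0 := by
    rintro rfl
    exact not_nontrivial _ ‹Nontrivial (Fin 0)›
  set W : (Fin T → Fin d × Fin d) → ℝ := fun f =>
    d.factorial * ⟪subproductLaw fun t => swap (f t).1 (f t).2,
      subproductLaw fun t => swap (f t).1 (f t).2⟫_ℝ - 1 with hW
  have hmean : ∫ f, W f ∂Measure.pi (fun _ : Fin T => pairUniform d) ≤
      d * exp (-(T : ℝ) / (3 * d)) := by
    have hinner := integral_inner_pow_subproductLaw_swap (d := d) 0 T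
    simp only [pow_zero, End.one_apply, zero_add] at hinner
    have hreturn := lazyTranspositionWalk_pow_apply_one_le (α := Fin d) T
    rw [Fintype.card_fin] at hreturn
    have hsum := sum_choose_mul_pow_mul_degreeEigenvalue_pow_le hd hT
    rw [hW, integral_sub .of_finite .of_finite, integral_const_mul, hinner]
    simp only [integral_const, probReal_univ, one_smul]
    linarith
  have hone (f : Fin T → Fin d × Fin d) : 1 ≤ d.factorial *
      ⟪subproductLaw fun t => swap (f t).1 (f t).2,
        subproductLaw fun t => swap (f t).1 (f t).2⟫_ℝ := by
    simpa only [Fintype.card_perm, Fintype.card_fin] using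
      one_le_card_mul_inner_self (sum_subproductLaw fun t => swap (f t).1 (f t).2)
  calc ∫ f, √(W f) ∂Measure.pi (fun _ : Fin T => pairUniform d)
      ≤ √(∫ f, W f ∂Measure.pi (fun _ : Fin T => pairUniform d)) :=
        strictConcaveOn_sqrt.concaveOn.le_map_integral continuous_sqrt.continuousOn isClosed_Ici
          (.of_forall fun f => sub_nonneg.2 (hone f)) .of_finite .of_finite
    _ ≤ √(d * exp (-(T : ℝ) / (3 * d))) := sqrt_le_sqrt hmean
    _ = (d : ℝ) ^ ((1 : ℝ) / 2) * exp (-(T : ℝ) / (6 * d)) := by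
        rw [sqrt_mul d.cast_nonneg, ← sqrt_eq_rpow, ← exp_half]
        ring_nf

end PairUniform

section SignedPermutations

open Equiv Finset
open scoped BigOperators

section EvenSigns

variable {α : Type*} [Fintype α]

variable (α) in
/-- The group of sign vectors `ξ ∈ {±1}^α` with an even number of negative entries. -/
def evenSigns : Subgroup (α → ℤˣ) :=
  (∏ i, Pi.evalMonoidHom (fun _ : α => ℤˣ) i).ker

lemma mem_evenSigns {s : α → ℤˣ} : s ∈ evenSigns α ↔ ∏ i, s i = 1 := by
  simp [evenSigns, MonoidHom.mem_ker]

instance : DecidablePred (· ∈ evenSigns α) := fun _ => decidable_of_iff' _ mem_evenSigns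

variable [DecidableEq α]

lemma card_evenSigns [Nonempty α] : Fintype.card (evenSigns α) = 2 ^ (Fintype.card α - 1) := by
  set prodHom := ∏ i, Pi.evalMonoidHom (fun _ : α => ℤˣ) i with hprodHom
  have hsurj : Function.Surjective prodHom := fun u =>
    ⟨Pi.mulSingle (Classical.arbitrary α) u, by simp [hprodHom]⟩
  have hcard := (evenSigns α).card_mul_index
  rw [evenSigns, ← hprodHom, Subgroup.index_ker, MonoidHom.range_eq_top.2 hsurj, hprodHom,
    ← evenSigns] at hcard
  simp only [Nat.card_eq_fintype_card, Subgroup.card_top, Fintype.card_units_int, Fintype.card_pi,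
    prod_const, card_univ] at hcard
  rw [← Nat.sub_add_cancel (Fintype.card_pos (α := α)), pow_succ] at hcard
  exact Nat.eq_of_mul_eq_mul_right two_pos hcard

/-- The sign vector which flips the two coordinates of `p`. -/
def signFlip (p : α × α) : evenSigns α :=
  ⟨Pi.mulSingle p.1 (-1) * Pi.mulSingle p.2 (-1), by
    simp [mem_evenSigns, prod_mul_distrib]⟩

/-- A sign vector which makes the signed permutation matrix of `τ` have determinant one. -/
def signLift (i₀ : α) (τ : Perm α) : α → ℤˣ := Pi.mulSingle i₀ (Perm.sign τ)

lemma prod_signLift (i₀ : α) (τ : Perm α) : ∏ i, signLift i₀ τ i = Perm.sign τ := by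
  simp [signLift]

end EvenSigns

section SignedPermMatrix

variable {α : Type*} [DecidableEq α]

/-- The matrix of the signed permutation `e_j ↦ s (σ j) e_{σ j}`. -/
def signedPermMatrix (s : α → ℤˣ) (σ : Perm α) : Matrix α α ℝ :=
  Matrix.of fun i j => if σ j = i then ((s i : ℤ) : ℝ) else 0

lemma signedPermMatrix_apply (s : α → ℤˣ) (σ : Perm α) (i j : α) :
    signedPermMatrix s σ i j = if σ j = i then ((s i : ℤ) : ℝ) else 0 := rfl

lemma signedPermMatrix_one_right (s : α → ℤˣ) :
    signedPermMatrix s 1 = Matrix.diagonal fun i => ((s i : ℤ) : ℝ) := by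
  ext i j
  by_cases h : i = j
  · simp [signedPermMatrix, h]
  · simp [signedPermMatrix, h, Ne.symm h]

lemma signedPermMatrix_one_one : signedPermMatrix (1 : α → ℤˣ) 1 = 1 := by
  simp [signedPermMatrix_one_right]

lemma signedPermMatrix_inj {s t : α → ℤˣ} {σ τ : Perm α} :
    signedPermMatrix s σ = signedPermMatrix t τ ↔ s = t ∧ σ = τ := by
  refine ⟨fun h => ?_, by rintro ⟨rfl, rfl⟩; rfl⟩
  have hentry (i j : α) := congrFun₂ h i j
  simp only [signedPermMatrix_apply] at hentry
  have hperm : σ = τ := by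
    ext j
    by_contra hne
    simpa [Ne.symm hne] using hentry (σ j) j
  subst hperm
  exact ⟨funext fun i => Units.ext (by simpa using hentry i (σ⁻¹ i)), rfl⟩

variable [Fintype α]

lemma signedPermMatrix_mul_apply (s : α → ℤˣ) (σ : Perm α) (B : Matrix α α ℝ) (i j : α) :
    (signedPermMatrix s σ * B) (σ i) j = ((s (σ i) : ℤ) : ℝ) * B i j := by
  simp [Matrix.mul_apply, signedPermMatrix_apply]

lemma mul_signedPermMatrix_apply (s : α → ℤˣ) (σ : Perm α) (B : Matrix α α ℝ) (i j : α) :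
    (B * signedPermMatrix s σ) i j = B i (σ j) * ((s (σ j) : ℤ) : ℝ) := by
  simp [Matrix.mul_apply, signedPermMatrix_apply]

lemma signedPermMatrix_mul (s t : α → ℤˣ) (σ τ : Perm α) :
    signedPermMatrix s σ * signedPermMatrix t τ = signedPermMatrix (s * t ∘ ⇑σ⁻¹) (σ * τ) := by
  ext i j
  obtain ⟨i, rfl⟩ := σ.surjective i
  rw [signedPermMatrix_mul_apply]
  simp [signedPermMatrix_apply]

lemma signedPermMatrix_one_mul (s t : α → ℤˣ) (τ : Perm α) :
    signedPermMatrix s 1 * signedPermMatrix t τ = signedPermMatrix (s * t) τ := by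
  simp [signedPermMatrix_mul]

variable (α) in
/-- The signed permutation matrices, as a submonoid of the monoid of matrices. -/
def signedPermMatrices : Submonoid (Matrix α α ℝ) where
  carrier := {M | ∃ s σ, M = signedPermMatrix s σ}
  one_mem' := ⟨1, 1, signedPermMatrix_one_one.symm⟩
  mul_mem' := by
    rintro _ _ ⟨s, σ, rfl⟩ ⟨t, τ, rfl⟩
    exact ⟨_, _, signedPermMatrix_mul s t σ τ⟩

lemma signedPermMatrix_mem (s : α → ℤˣ) (σ : Perm α) :
    signedPermMatrix s σ ∈ signedPermMatrices α :=
  ⟨s, σ, rfl⟩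

lemma det_signedPermMatrix (s : α → ℤˣ) (σ : Perm α) :
    (signedPermMatrix s σ).det = (((∏ i, s i) * Perm.sign σ : ℤˣ) : ℤ) := by
  have hperm : signedPermMatrix (1 : α → ℤˣ) σ = (σ⁻¹).permMatrix ℝ := by
    ext i j
    simp [signedPermMatrix, Perm.permMatrix, PEquiv.toMatrix_apply, eq_symm_apply, eq_comm]
  rw [← mul_one s, ← signedPermMatrix_one_mul, Matrix.det_mul, signedPermMatrix_one_right,
    Matrix.det_diagonal, hperm, Matrix.det_permutation]
  simp

end SignedPermMatrix

section Rotations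

variable {d : ℕ} {i j : Fin d}

lemma rotM_mul_apply (hij : i ≠ j) (θ : ℝ) (B : Matrix (Fin d) (Fin d) ℝ) (k l : Fin d) :
    (rotM d i j θ * B) k l = if k = i then cos θ * B i l - sin θ * B j l
      else if k = j then sin θ * B i l + cos θ * B j l else B k l := by
  rw [Matrix.mul_apply]
  split_ifs with hki hkj
  · subst hki
    rw [sum_eq_add k j hij (fun c _ hc => by simp [rotM, hc, hij, hc.1.symm]) (by simp) (by simp)]
    simp [rotM, hij.symm, sub_eq_add_neg]
  · subst hkj
    rw [sum_eq_add i k hij (fun c _ hc => by simp [rotM, hc, hij.symm, hc.2.symm])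
      (by simp) (by simp)]
    simp [rotM, hij.symm]
  · simp [rotM, hki, hkj]

lemma rotM_add (hij : i ≠ j) (θ φ : ℝ) : rotM d i j θ * rotM d i j φ = rotM d i j (θ + φ) := by
  ext k l
  rw [rotM_mul_apply hij]
  by_cases hki : k = i <;> by_cases hkj : k = j <;> by_cases hli : l = i <;>
    by_cases hlj : l = j <;>
    simp_all [rotM, cos_add, sin_add, hij.symm, eq_comm] <;> ring

lemma rotM_mod2pi (i j : Fin d) (x : ℝ) : rotM d i j (mod2pi x) = rotM d i j x := by
  have hx : mod2pi x = x - (⌊x / (2 * π)⌋ : ℤ) * (2 * π) := by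
    rw [mod2pi, Int.fract]
    field_simp
  rw [rotM, rotM, hx, cos_sub_int_mul_two_pi, sin_sub_int_mul_two_pi]

lemma rotM_half_pi (hij : i ≠ j) :
    rotM d i j (π / 2) = signedPermMatrix (Pi.mulSingle i (-1)) (swap i j) := by
  ext k l
  by_cases hki : k = i <;> by_cases hkj : k = j <;> by_cases hli : l = i <;>
    by_cases hlj : l = j <;>
    simp_all [rotM, signedPermMatrix, hij.symm, swap_apply_of_ne_of_ne, Pi.mulSingle_apply, eq_comm]

lemma rotM_pi (hij : i ≠ j) : rotM d i j π = signedPermMatrix (signFlip (i, j)) 1 := by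
  ext k l
  by_cases hki : k = i <;> by_cases hkj : k = j <;> by_cases hli : l = i <;>
    by_cases hlj : l = j <;>
    simp_all [rotM, signedPermMatrix, signFlip, hij.symm, Pi.mulSingle_apply, eq_comm]

lemma signedPermMatrix_mul_rotM (s : Fin d → ℤˣ) (σ : Perm (Fin d)) (θ : ℝ) :
    signedPermMatrix s σ * rotM d i j θ =
      rotM d (σ i) (σ j) (((s (σ i) * s (σ j) : ℤˣ) : ℤ) * θ) * signedPermMatrix s σ := by
  have hreindex (φ : ℝ) (k l : Fin d) :
      rotM d (σ i) (σ j) φ (σ k) (σ l) = rotM d i j φ k l := by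
    simp [rotM]
  ext k l
  obtain ⟨k, rfl⟩ := σ.surjective k
  rw [signedPermMatrix_mul_apply, mul_signedPermMatrix_apply, hreindex]
  simp only [rotM, Matrix.of_apply]
  split_ifs <;>
    rcases Int.units_eq_one_or (s (σ i)) with hi | hi <;>
    rcases Int.units_eq_one_or (s (σ j)) with hj | hj <;>
    simp_all [mul_comm]

lemma exists_evenSigns_signedPermMatrix_mul_swap (i₀ : Fin d) (τ : Perm (Fin d)) (hij : i ≠ j) :
    ∃ ξ : evenSigns (Fin d), signedPermMatrix (signLift i₀ (τ * swap i j)) (τ * swap i j) =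
      signedPermMatrix ξ 1 * (signedPermMatrix (signLift i₀ τ) τ * rotM d i j (π / 2)) := by
  set s : Fin d → ℤˣ := signLift i₀ τ * Pi.mulSingle i (-1) ∘ ⇑τ⁻¹ with hs
  have hprod : ∏ k, s k = Perm.sign (τ * swap i j) := by
    simp only [hs, Pi.mul_apply, Function.comp_apply, prod_mul_distrib, prod_signLift,
      Equiv.prod_comp τ⁻¹ (Pi.mulSingle i (-1) : Fin d → ℤˣ)]
    simp [Perm.sign_swap hij]
  refine ⟨⟨signLift i₀ (τ * swap i j) * s⁻¹, mem_evenSigns.2 ?_⟩, ?_⟩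
  · simp only [Pi.mul_apply, Pi.inv_apply, prod_mul_distrib, prod_signLift, prod_inv_distrib,
      hprod, mul_inv_cancel]
  · rw [rotM_half_pi hij, signedPermMatrix_mul, signedPermMatrix_one_mul, inv_mul_cancel_right]

end Rotations

end SignedPermutations

section UniformLaws

open Equiv Finset ProbabilityTheory
open scoped BigOperators

lemma exists_intUnits_cast_eq {x : ℝ} : (∃ u : ℤˣ, ((u : ℤ) : ℝ) = x) ↔ x = 1 ∨ x = -1 := by
  constructor
  · rintro ⟨u, rfl⟩
    rcases Int.units_eq_one_or u with rfl | rfl <;> simp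
  · rintro (rfl | rfl)
    exacts [⟨1, by simp⟩, ⟨-1, by simp⟩]

variable {d : ℕ}

lemma injective_intUnits_cast_comp :
    Function.Injective fun (s : evenSigns (Fin d)) i => (((s : Fin d → ℤˣ) i : ℤ) : ℝ) :=
  fun _ _ h => Subtype.ext (funext fun i => Units.ext (Int.cast_injective (α := ℝ) (congrFun h i)))

lemma signMeasure_eq_uniformOn [Nonempty (Fin d)] : signMeasure d = uniformOn
    (Set.range fun (s : evenSigns (Fin d)) i => (((s : Fin d → ℤˣ) i : ℤ) : ℝ)) := by
  rw [signMeasure, ← inv_natCast_smul_count_restrict_eq_uniformOn (Set.finite_range _)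
    (n := 2 ^ (d - 1))]
  · congr
    ext v
    constructor
    · rintro ⟨hv, hprod⟩
      choose s hs using fun i => exists_intUnits_cast_eq.2 (hv i)
      refine ⟨⟨s, mem_evenSigns.2 (Units.ext ?_)⟩, funext hs⟩
      simp only [← hs] at hprod
      push_cast
      exact_mod_cast hprod
    · rintro ⟨s, rfl⟩
      refine ⟨fun i => exists_intUnits_cast_eq.1 ⟨_, rfl⟩, ?_⟩
      have := congrArg (fun u : ℤˣ => ((u : ℤ) : ℝ)) (mem_evenSigns.1 s.2)
      simpa using this
  · rw [← Nat.card_coe_set_eq, Nat.card_range_of_injective injective_intUnits_cast_comp,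
      Nat.card_eq_fintype_card, card_evenSigns, Fintype.card_fin]

instance [Nonempty (Fin d)] : IsProbabilityMeasure (signMeasure d) := by
  rw [signMeasure_eq_uniformOn]
  exact isProbabilityMeasure_uniformOn (Set.finite_range _) (Set.range_nonempty _)

lemma integral_signMeasure [Nonempty (Fin d)] (f : (Fin d → ℝ) → ℝ) :
    ∫ v, f v ∂signMeasure d =
      𝔼 s : evenSigns (Fin d), f fun i => (((s : Fin d → ℤˣ) i : ℤ) : ℝ) := by
  rw [signMeasure_eq_uniformOn, integral_uniformOn_range injective_intUnits_cast_comp]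

instance {m n : Type*} [Countable m] [Countable n] : MeasurableSingletonClass (Matrix m n ℝ) :=
  inferInstanceAs (MeasurableSingletonClass (m → n → ℝ))

lemma injective_signedPermMatrix_mul_signLift (i₀ : Fin d) :
    Function.Injective fun p : Perm (Fin d) × evenSigns (Fin d) =>
      signedPermMatrix (p.2.1 * signLift i₀ p.1) p.1 := by
  rintro ⟨σ, s⟩ ⟨τ, t⟩ h
  obtain ⟨hsign, rfl⟩ := signedPermMatrix_inj.1 h
  exact Prod.ext rfl (Subtype.ext (mul_right_cancel hsign))

lemma range_signedPermMatrix_mul_signLift (i₀ : Fin d) :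
    (Set.range fun p : Perm (Fin d) × evenSigns (Fin d) =>
      signedPermMatrix (p.2.1 * signLift i₀ p.1) p.1) =
    {M | (∀ i j, M i j = 0 ∨ M i j = 1 ∨ M i j = -1) ∧
      (∃ σ : Perm (Fin d), ∀ i j, M i j ≠ 0 ↔ σ j = i) ∧ M.det = 1} := by
  ext M
  constructor
  · rintro ⟨⟨σ, s⟩, rfl⟩
    refine ⟨fun i j => ?_, ⟨σ, fun i j => ?_⟩, ?_⟩ <;> beta_reduce
    · rw [signedPermMatrix_apply, ← exists_intUnits_cast_eq]
      split_ifs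
      · exact .inr ⟨_, rfl⟩
      · exact .inl rfl
    · simp [signedPermMatrix_apply]
    · rw [det_signedPermMatrix]
      simp only [Pi.mul_apply, prod_mul_distrib, mem_evenSigns.1 s.2, prod_signLift, one_mul,
        Int.units_mul_self, Units.val_one, Int.cast_one]
  · rintro ⟨hM, ⟨σ, hσ⟩, hdet⟩
    have hunit (i : Fin d) : ∃ u : ℤˣ, ((u : ℤ) : ℝ) = M i (σ⁻¹ i) := exists_intUnits_cast_eq.2
      ((hM i _).resolve_left ((hσ i _).2 (by simp)))
    choose s hs using hunit
    have hMs : M = signedPermMatrix s σ := by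
      ext i j
      rw [signedPermMatrix_apply]
      split_ifs with h
      · simp [hs, ← h]
      · exact not_not.1 (mt (hσ i j).1 h)
    have hsign : (∏ i, s i) * Perm.sign σ = 1 := by
      rw [hMs, det_signedPermMatrix] at hdet
      exact Units.ext (Int.cast_injective (α := ℝ) (by simpa using hdet))
    refine ⟨(σ, ⟨s * (signLift i₀ σ)⁻¹, mem_evenSigns.2 ?_⟩), ?_⟩
    · simpa [prod_mul_distrib, prod_signLift] using hsign
    · simp [hMs]

lemma signedPermSO_eq_uniformOn (i₀ : Fin d) : signedPermSO d = uniformOn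
    (Set.range fun p : Perm (Fin d) × evenSigns (Fin d) =>
      signedPermMatrix (p.2.1 * signLift i₀ p.1) p.1) := by
  have : Nonempty (Fin d) := ⟨i₀⟩
  rw [signedPermSO, ← range_signedPermMatrix_mul_signLift i₀,
    inv_natCast_smul_count_restrict_eq_uniformOn (Set.finite_range _)]
  rw [← Nat.card_coe_set_eq,
    Nat.card_range_of_injective (injective_signedPermMatrix_mul_signLift i₀),
    Nat.card_eq_fintype_card, Fintype.card_prod, Fintype.card_perm, card_evenSigns,
    Fintype.card_fin]

instance [Nonempty (Fin d)] : IsProbabilityMeasure (signedPermSO d) := by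
  rw [signedPermSO_eq_uniformOn (Classical.arbitrary (Fin d))]
  exact isProbabilityMeasure_uniformOn (Set.finite_range _) (Set.range_nonempty _)

lemma integral_signedPermSO (i₀ : Fin d) (f : Matrix (Fin d) (Fin d) ℝ → ℝ) :
    ∫ M, f M ∂signedPermSO d = 𝔼 τ : Perm (Fin d), 𝔼 s : evenSigns (Fin d),
      f (signedPermMatrix (s.1 * signLift i₀ τ) τ) := by
  rw [signedPermSO_eq_uniformOn i₀,
    integral_uniformOn_range (injective_signedPermMatrix_mul_signLift i₀), ← univ_product_univ,
    expect_product]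

end UniformLaws

section TestFunctions

open Set Finset
open scoped BigOperators

/-- A measurable function with values in `[0, 1]`. Testing against these instead of sets costs
nothing in total variation and keeps the class closed under averaging. -/
structure IsTestFunction {X : Type*} [MeasurableSpace X] (Φ : X → ℝ) : Prop where
  measurable : Measurable Φ
  mem_Icc : ∀ x, Φ x ∈ Icc (0 : ℝ) 1

variable {X Y : Type*} [MeasurableSpace X] [MeasurableSpace Y] {Φ : X → ℝ}

lemma expect_mem_Icc {ι : Type*} [Fintype ι] [Nonempty ι] {φ : ι → ℝ}
    (hφ : ∀ i, φ i ∈ Icc (0 : ℝ) 1) : 𝔼 i, φ i ∈ Icc (0 : ℝ) 1 :=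
  ⟨expect_nonneg fun i _ => (hφ i).1, expect_le univ_nonempty fun i _ => (hφ i).2⟩

lemma isTestFunction_indicator_one {s : Set X} (hs : MeasurableSet s) :
    IsTestFunction (s.indicator 1) :=
  ⟨measurable_one.indicator hs, fun x => by by_cases hx : x ∈ s <;> simp [hx]⟩

namespace IsTestFunction

lemma comp (hΦ : IsTestFunction Φ) {f : Y → X} (hf : Measurable f) :
    IsTestFunction fun y => Φ (f y) :=
  ⟨hΦ.measurable.comp hf, fun y => hΦ.mem_Icc (f y)⟩

lemma norm_le_one (hΦ : IsTestFunction Φ) (x : X) : ‖Φ x‖ ≤ 1 := by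
  rw [norm_of_nonneg (hΦ.mem_Icc x).1]
  exact (hΦ.mem_Icc x).2

lemma integrable (hΦ : IsTestFunction Φ) (μ : Measure X) [IsFiniteMeasure μ] : Integrable Φ μ :=
  .of_bound hΦ.measurable.aestronglyMeasurable 1 (.of_forall hΦ.norm_le_one)

lemma integrable_mul {ι : Type*} [Finite ι] [MeasurableSpace ι] [MeasurableSingletonClass ι]
    (hΦ : IsTestFunction Φ) (μ : Measure X) [IsFiniteMeasure μ] (w : ι → ℝ) {i : X → ι}
    (hi : Measurable i) : Integrable (fun x => w (i x) * Φ x) μ :=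
  (Integrable.of_finite.comp_measurable (g := w) hi).mul_bdd (c := 1)
    hΦ.measurable.aestronglyMeasurable (.of_forall hΦ.norm_le_one)

lemma integral_mem_Icc (hΦ : IsTestFunction Φ) (μ : Measure X) [IsProbabilityMeasure μ] :
    ∫ x, Φ x ∂μ ∈ Icc (0 : ℝ) 1 :=
  (convex_Icc 0 1).integral_mem isClosed_Icc (.of_forall hΦ.mem_Icc) (hΦ.integrable μ)

lemma integral_prod_right {f : Y → X → ℝ} (hf : IsTestFunction (Function.uncurry f))
    (μ : Measure X) [IsProbabilityMeasure μ] : IsTestFunction fun y => ∫ x, f y x ∂μ :=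
  ⟨hf.measurable.stronglyMeasurable.integral_prod_right.measurable,
    fun _ => (hf.comp measurable_prodMk_left).integral_mem_Icc μ⟩

lemma expect {ι : Type*} [Fintype ι] [Nonempty ι] {Ψ : ι → X → ℝ}
    (hΨ : ∀ i, IsTestFunction (Ψ i)) : IsTestFunction fun x => 𝔼 i, Ψ i x where
  measurable := by
    simp only [expect_eq_sum_div_card]
    exact (Finset.measurable_fun_sum _ fun i _ => (hΨ i).measurable).div_const _
  mem_Icc x := expect_mem_Icc fun i => (hΨ i).mem_Icc x

end IsTestFunction

lemma integral_expect {ι : Type*} [Fintype ι] {μ : Measure X} {f : ι → X → ℝ}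
    (hf : ∀ i, Integrable (f i) μ) : ∫ x, 𝔼 i, f i x ∂μ = 𝔼 i, ∫ x, f i x ∂μ := by
  simp only [expect_eq_sum_div_card]
  rw [integral_div, integral_finsetSum _ fun i _ => hf i]

end TestFunctions

section KacWalk

open Equiv Finset
open scoped BigOperators

section Measurability

lemma measurable_matrix_entry {m n : Type*} (i : m) (j : n) :
    Measurable fun M : Matrix m n ℝ => M i j :=
  (measurable_pi_apply j).comp (measurable_pi_apply (X := fun _ : m => n → ℝ) i)

lemma measurable_matrix {Ω m n : Type*} [MeasurableSpace Ω] {F : Ω → Matrix m n ℝ}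
    (hF : ∀ i j, Measurable fun ω => F ω i j) : Measurable F :=
  measurable_pi_iff.2 fun i => measurable_pi_iff.2 (hF i)

instance {n : Type*} [Fintype n] : MeasurableMul₂ (Matrix n n ℝ) where
  measurable_mul := measurable_matrix fun i j => by
    simp only [Matrix.mul_apply]
    exact Finset.measurable_sum _ fun k _ =>
      ((measurable_matrix_entry i k).comp measurable_fst).mul
        ((measurable_matrix_entry k j).comp measurable_snd)

@[fun_prop]
lemma measurable_diagonal {n : Type*} [DecidableEq n] :
    Measurable (Matrix.diagonal : (n → ℝ) → Matrix n n ℝ) := by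
  refine measurable_matrix fun i j => ?_
  simp only [Matrix.diagonal_apply]
  split_ifs <;> fun_prop

@[fun_prop]
lemma measurable_mod2pi : Measurable mod2pi := by
  unfold mod2pi
  fun_prop

@[fun_prop]
lemma measurable_rotM {d : ℕ} (i j : Fin d) : Measurable (rotM d i j) := by
  refine measurable_matrix fun k l => ?_
  simp only [rotM, Matrix.of_apply]
  split_ifs <;> fun_prop

/-- The rotation by which a step of the Kac walk with update variables `x` multiplies. -/
def stepMatrix {d : ℕ} (x : (Fin d × Fin d) × ℝ) : Matrix (Fin d) (Fin d) ℝ :=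
  rotM d x.1.1 x.1.2 x.2

@[fun_prop]
lemma measurable_stepMatrix {d : ℕ} : Measurable (stepMatrix (d := d)) :=
  measurable_from_prod_countable_right fun p => measurable_rotM p.1 p.2

lemma kacMatrix_zero {d : ℕ} (ω : Fin 0 → (Fin d × Fin d) × ℝ) : kacMatrix ω = 1 := by
  simp [kacMatrix]

lemma kacMatrix_succ {d T : ℕ} (ω : Fin (T + 1) → (Fin d × Fin d) × ℝ) :
    kacMatrix ω = stepMatrix (ω (Fin.last T)) * kacMatrix fun t : Fin T => ω t.castSucc := by
  rw [kacMatrix, List.ofFn_succ', List.concat_eq_append, List.reverse_append]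
  simp [kacMatrix, stepMatrix]

@[fun_prop]
lemma measurable_kacMatrix {d T : ℕ} : Measurable (kacMatrix (d := d) (T := T)) := by
  induction T with
  | zero =>
    simp only [funext kacMatrix_zero, measurable_const]
  | succ T ih =>
    simp only [funext kacMatrix_succ]
    fun_prop

end Measurability

section AngleInvariance

variable {q : Measure ℝ} {d : ℕ}

lemma integral_comp_rotM_of_map_mod2pi {f : ℝ → ℝ} (hf : Measurable f)
    (hq : Measure.map (fun θ => mod2pi (f θ)) q = q) {Φ : Matrix (Fin d) (Fin d) ℝ → ℝ}
    (hΦ : Measurable Φ) (i j : Fin d) :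
    ∫ θ, Φ (rotM d i j (f θ)) ∂q = ∫ θ, Φ (rotM d i j θ) ∂q := by
  have hΦrot : Measurable fun θ => Φ (rotM d i j θ) := hΦ.comp (measurable_rotM i j)
  conv_rhs => rw [← hq]
  rw [integral_map (by fun_prop) hΦrot.aestronglyMeasurable]
  simp only [rotM_mod2pi]

lemma mod2pi_mod2pi_add (x y : ℝ) : mod2pi (mod2pi x + y) = mod2pi (x + y) := by
  have hx : mod2pi x + y = x + y - (⌊x / (2 * π)⌋ : ℤ) * (2 * π) := by
    rw [mod2pi, Int.fract]
    field_simp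
    ring
  rw [hx, mod2pi, mod2pi, sub_div, mul_div_cancel_right₀ _ two_pi_pos.ne', Int.fract_sub_intCast]

lemma map_mod2pi_add_pi (hq : Measure.map (fun θ => mod2pi (θ + π / 2)) q = q) :
    Measure.map (fun θ => mod2pi (θ + π)) q = q := by
  conv_rhs => rw [← hq, ← hq]
  rw [Measure.map_map (by fun_prop) (by fun_prop)]
  simp only [Function.comp_def, mod2pi_mod2pi_add, add_assoc, add_halves]

end AngleInvariance

instance {d : ℕ} : SFinite (pairUniform d) := by
  rw [pairUniform]
  infer_instance

lemma integral_qKacParam {d : ℕ} {q : Measure ℝ} [SFinite q] {f : (Fin d × Fin d) × ℝ → ℝ}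
    (hf : Integrable f (qKacParam d q)) :
    ∫ x, f x ∂qKacParam d q = ∫ p, ∫ θ, f (p, θ) ∂q ∂pairUniform d :=
  integral_prod f hf

variable {d : ℕ} [Nontrivial (Fin d)] {q : Measure ℝ} [IsProbabilityMeasure q]
  {Φ : Matrix (Fin d) (Fin d) ℝ → ℝ}

instance : IsProbabilityMeasure (qKacParam d q) := by
  rw [qKacParam]
  infer_instance

/-- The transition operator of the `q`-Kac walk, acting on functions of the current state. -/
def kacStep (q : Measure ℝ) (Φ : Matrix (Fin d) (Fin d) ℝ → ℝ) (M : Matrix (Fin d) (Fin d) ℝ) :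
    ℝ :=
  ∫ x, Φ (stepMatrix x * M) ∂qKacParam d q

lemma isTestFunction_kacStep (hΦ : IsTestFunction Φ) : IsTestFunction (kacStep q Φ) :=
  (hΦ.comp (by fun_prop)).integral_prod_right _

lemma integral_kacMatrix_succ (hΦ : IsTestFunction Φ) (T : ℕ) :
    ∫ ω, Φ (kacMatrix ω) ∂Measure.pi (fun _ : Fin (T + 1) => qKacParam d q) =
      ∫ ω, kacStep q Φ (kacMatrix ω) ∂Measure.pi (fun _ : Fin T => qKacParam d q) := by
  simp only [kacMatrix_succ]
  exact integral_pi_succ (qKacParam d q) T (f := fun z => Φ (stepMatrix z.2 * kacMatrix z.1))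
    ((hΦ.comp (by fun_prop)).integrable _)

lemma integral_signedPermMatrix_mul_stepMatrix
    (hneg : Measure.map (fun θ => mod2pi (-θ)) q = q) (hΦ : IsTestFunction Φ)
    (s : Fin d → ℤˣ) (σ : Perm (Fin d)) :
    ∫ x, Φ (signedPermMatrix s σ * stepMatrix x) ∂qKacParam d q =
      ∫ x, Φ (stepMatrix x * signedPermMatrix s σ) ∂qKacParam d q := by
  have hright : IsTestFunction fun M => Φ (M * signedPermMatrix s σ) := hΦ.comp (by fun_prop)
  have hunit (u : ℤˣ) (i j : Fin d) :
      ∫ θ, Φ (rotM d i j ((u : ℤ) * θ) * signedPermMatrix s σ) ∂q =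
        ∫ θ, Φ (rotM d i j θ * signedPermMatrix s σ) ∂q := by
    rcases Int.units_eq_one_or u with rfl | rfl
    · simp
    · simpa using integral_comp_rotM_of_map_mod2pi measurable_neg hneg hright.measurable i j
  rw [integral_qKacParam ((hΦ.comp (by fun_prop)).integrable _),
    integral_qKacParam ((hright.comp (by fun_prop)).integrable _),
    integral_pairUniform, integral_pairUniform]
  refine expect_equiv (σ.prodCongr σ) (by simp) fun p _ => ?_
  simp only [stepMatrix, signedPermMatrix_mul_rotM, hunit, prodCongr_apply, Prod.map]

lemma kacStep_mul_of_mem (hneg : Measure.map (fun θ => mod2pi (-θ)) q = q)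
    {B : Matrix (Fin d) (Fin d) ℝ} (hB : B ∈ signedPermMatrices (Fin d))
    (hΦ : IsTestFunction Φ) (M : Matrix (Fin d) (Fin d) ℝ) :
    kacStep q Φ (B * M) = ∫ x, Φ (B * (stepMatrix x * M)) ∂qKacParam d q := by
  obtain ⟨s, σ, rfl⟩ := hB
  have := integral_signedPermMatrix_mul_stepMatrix hneg (Φ := fun R => Φ (R * M))
    (hΦ.comp (by fun_prop)) s σ
  simpa only [kacStep, mul_assoc] using this.symm

lemma integral_kacMatrix_mul_of_mem (hneg : Measure.map (fun θ => mod2pi (-θ)) q = q)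
    {B : Matrix (Fin d) (Fin d) ℝ} (hB : B ∈ signedPermMatrices (Fin d))
    (hΦ : IsTestFunction Φ) (T : ℕ) :
    ∫ ω, Φ (kacMatrix ω * B) ∂Measure.pi (fun _ : Fin T => qKacParam d q) =
      ∫ ω, Φ (B * kacMatrix ω) ∂Measure.pi (fun _ : Fin T => qKacParam d q) := by
  induction T generalizing Φ with
  | zero => simp only [kacMatrix_zero, one_mul, mul_one]
  | succ T ih =>
    have hright := integral_kacMatrix_succ (q := q) (Φ := fun M => Φ (M * B))
      (hΦ.comp (by fun_prop)) T
    have hleft := integral_kacMatrix_succ (q := q) (Φ := fun M => Φ (B * M))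
      (hΦ.comp (by fun_prop)) T
    have hstep (M : Matrix (Fin d) (Fin d) ℝ) :
        kacStep q (fun M => Φ (B * M)) M = kacStep q Φ (B * M) :=
      (kacStep_mul_of_mem hneg hB hΦ M).symm
    rw [hright, hleft]
    simp only [hstep, ← ih (isTestFunction_kacStep hΦ)]
    simp only [kacStep, mul_assoc]

section Comparison

variable {G : Type*} [Group G] [Fintype G] {a : Fin d × Fin d → G}
  {A : G → Matrix (Fin d) (Fin d) ℝ} {α : ℝ}

lemma integral_sum_lazyStep_mul (hα : Measure.map (fun θ => mod2pi (θ + α)) q = q)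
    (hΦ : IsTestFunction Φ)
    (hΦA : ∀ g p, p.1 ≠ p.2 → ∀ M, Φ (A (g * a p) * M) = Φ (A g * rotM d p.1 p.2 α * M))
    (v : EuclideanSpace ℝ G) (M : Matrix (Fin d) (Fin d) ℝ) :
    ∫ x, ∑ g, lazyStep (a x.1) v g * Φ (A g * (stepMatrix x * M)) ∂qKacParam d q =
      ∑ g, v g * ∫ x, Φ (A g * (stepMatrix x * M)) ∂qKacParam d q := by
  have hint (g : G) (p : Fin d × Fin d) :
      Integrable (fun θ => Φ (A g * (rotM d p.1 p.2 θ * M))) q :=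
    (hΦ.comp (by fun_prop)).integrable q
  have hshift {p : Fin d × Fin d} (hp : p.1 ≠ p.2) (g : G) :
      ∫ θ, Φ (A (g * a p) * (rotM d p.1 p.2 θ * M)) ∂q =
        ∫ θ, Φ (A g * (rotM d p.1 p.2 θ * M)) ∂q := by
    rw [← integral_comp_rotM_of_map_mod2pi (by fun_prop) hα (d := d)
      (Φ := fun R => Φ (A g * (R * M))) (hΦ.comp (by fun_prop)).measurable]
    simp only [hΦA g p hp, add_comm _ α, ← rotM_add hp, mul_assoc]
  simp only [← integral_const_mul]
  rw [← integral_finsetSum _ fun g _ => (hΦ.comp (by fun_prop)).integrable _ |>.const_mul _,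
    integral_qKacParam, integral_qKacParam]
  · refine integral_congr_ae (ae_pairUniform_ne.mono fun p hp => ?_)
    simp only [stepMatrix]
    rw [integral_finsetSum _ fun g _ => (hint g p).const_mul _,
      integral_finsetSum _ fun g _ => (hint g p).const_mul _]
    simp only [integral_const_mul]
    exact sum_lazyStep_mul_of_mul_right_invariant (hshift hp) v
  · exact integrable_finsetSum _ fun g _ => ((hΦ.comp (by fun_prop)).integrable _).const_mul _
  · exact integrable_finsetSum _ fun g _ => (hΦ.comp (by fun_prop)).integrable_mul _
      (fun p => lazyStep (a p) v g) measurable_fst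

variable [DecidableEq G]

theorem integral_kacMatrix_eq_integral_sum_subproductLaw
    (hneg : Measure.map (fun θ => mod2pi (-θ)) q = q)
    (hα : Measure.map (fun θ => mod2pi (θ + α)) q = q)
    (hrot : ∀ i j, i ≠ j → rotM d i j α ∈ signedPermMatrices (Fin d))
    (hA : ∀ g, A g ∈ signedPermMatrices (Fin d)) (hA1 : A 1 = 1) (hΦ : IsTestFunction Φ)
    (hΦA : ∀ g p, p.1 ≠ p.2 → ∀ M, Φ (A (g * a p) * M) = Φ (A g * rotM d p.1 p.2 α * M)) (T : ℕ) :
    ∫ ω, Φ (kacMatrix ω) ∂Measure.pi (fun _ : Fin T => qKacParam d q) =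
      ∫ ω, ∑ g, subproductLaw (fun t => a (ω t).1) g * Φ (A g * kacMatrix ω)
        ∂Measure.pi (fun _ : Fin T => qKacParam d q) := by
  induction T generalizing Φ with
  | zero => simp [subproductLaw_zero, hA1]
  | succ T ih =>
    have hstepA (g : G) (p : Fin d × Fin d) (hp : p.1 ≠ p.2) (M : Matrix (Fin d) (Fin d) ℝ) :
        kacStep q Φ (A (g * a p) * M) = kacStep q Φ (A g * rotM d p.1 p.2 α * M) := by
      rw [kacStep_mul_of_mem hneg (hA _) hΦ,
        kacStep_mul_of_mem hneg (mul_mem (hA g) (hrot _ _ hp)) hΦ]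
      simp only [hΦA g p hp]
    have htest (g : G) : IsTestFunction fun z :
        (Fin T → (Fin d × Fin d) × ℝ) × ((Fin d × Fin d) × ℝ) =>
        Φ (A g * (stepMatrix z.2 * kacMatrix z.1)) := hΦ.comp (by fun_prop)
    have hint (g : G) := (htest g).integrable_mul
      ((Measure.pi fun _ => qKacParam d q).prod (qKacParam d q))
      (fun y : (Fin T → Fin d × Fin d) × (Fin d × Fin d) =>
        lazyStep (a y.2) (subproductLaw fun t => a (y.1 t)) g)
      (i := fun z => (fun t => (z.1 t).1, z.2.1)) (by fun_prop)
    rw [integral_kacMatrix_succ hΦ, ih (isTestFunction_kacStep hΦ) hstepA]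
    simp only [kacStep_mul_of_mem hneg (hA _) hΦ, ← integral_sum_lazyStep_mul hα hΦ hΦA,
      kacMatrix_succ, subproductLaw_succ]
    exact (integral_pi_succ (qKacParam d q) T (integrable_finsetSum _ fun g _ => hint g)).symm

theorem abs_integral_kacMatrix_sub_expect_le {T : ℕ}
    (hneg : Measure.map (fun θ => mod2pi (-θ)) q = q)
    (hα : Measure.map (fun θ => mod2pi (θ + α)) q = q)
    (hrot : ∀ i j, i ≠ j → rotM d i j α ∈ signedPermMatrices (Fin d))
    (hA : ∀ g, A g ∈ signedPermMatrices (Fin d)) (hA1 : A 1 = 1) (hΦ : IsTestFunction Φ)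
    (hΦA : ∀ g p, p.1 ≠ p.2 → ∀ M, Φ (A (g * a p) * M) = Φ (A g * rotM d p.1 p.2 α * M))
    {D : (Fin T → Fin d × Fin d) → ℝ} (hD : ∀ f (φ : G → ℝ), (∀ g, φ g ∈ Set.Icc 0 1) →
      |∑ g, subproductLaw (fun t => a (f t)) g * φ g - 𝔼 g, φ g| ≤ D f) :
    |∫ ω, Φ (kacMatrix ω) ∂Measure.pi (fun _ : Fin T => qKacParam d q) -
        𝔼 g, ∫ ω, Φ (A g * kacMatrix ω) ∂Measure.pi (fun _ : Fin T => qKacParam d q)| ≤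
      ∫ f, D f ∂Measure.pi fun _ : Fin T => pairUniform d := by
  set ν := Measure.pi fun _ : Fin T => qKacParam d q
  have hpairs : MeasurePreserving (fun (ω : Fin T → (Fin d × Fin d) × ℝ) t => (ω t).1) ν
      (Measure.pi fun _ => pairUniform d) :=
    measurePreserving_pi _ _ fun _ => measurePreserving_fst
  have hint (g : G) : Integrable (fun ω => Φ (A g * kacMatrix ω)) ν :=
    (hΦ.comp (by fun_prop)).integrable ν
  have hintLaw (g : G) : Integrable
      (fun ω => subproductLaw (fun t => a (ω t).1) g * Φ (A g * kacMatrix ω)) ν :=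
    (hΦ.comp (by fun_prop)).integrable_mul ν
      (fun f : Fin T → Fin d × Fin d => subproductLaw (fun t => a (f t)) g) hpairs.measurable
  have hintExpect : Integrable (fun ω => 𝔼 g, Φ (A g * kacMatrix ω)) ν :=
    (IsTestFunction.expect fun g => hΦ.comp (by fun_prop)).integrable ν
  rw [integral_kacMatrix_eq_integral_sum_subproductLaw hneg hα hrot hA hA1 hΦ hΦA,
    ← integral_expect hint,
    ← integral_sub (integrable_finsetSum _ fun g _ => hintLaw g) hintExpect, ← hpairs.map_eq,
    integral_map hpairs.aemeasurable (measurable_of_finite D).aestronglyMeasurable,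
    ← norm_eq_abs]
  refine norm_integral_le_of_norm_le (hpairs.integrable_comp_of_integrable .of_finite)
    (.of_forall fun ω => ?_)
  exact hD _ _ fun g => hΦ.mem_Icc _

end Comparison

end KacWalk

section Connectivity

open Finset

section SignFlips

variable {α : Type*} [Fintype α] [DecidableEq α]

/-- The edges `f t` connect `α`: every nonempty proper set of vertices is crossed by an edge. -/
def IsConnecting {ι : Type*} (f : ι → α × α) : Prop :=
  ∀ S : Finset α, S.Nonempty → S ≠ univ → ∃ t, ¬((f t).1 ∈ S ↔ (f t).2 ∈ S)

lemma signFlip_mul_self (p : α × α) : signFlip p * signFlip p = 1 :=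
  Subtype.ext (funext fun _ => Int.units_mul_self _)

lemma signFlip_self (i : α) : signFlip (i, i) = 1 :=
  Subtype.ext (funext fun _ => Int.units_mul_self _)

lemma signFlip_mul_signFlip (i j k : α) : signFlip (i, j) * signFlip (j, k) = signFlip (i, k) := by
  refine Subtype.ext (funext fun l => ?_)
  simp only [signFlip, Subgroup.coe_mul, Pi.mul_apply]
  rw [mul_assoc, ← mul_assoc (Pi.mulSingle j (-1) l), Int.units_mul_self, one_mul]

lemma eq_top_of_forall_signFlip_mem {H : Subgroup (evenSigns α)} (i₀ : α)
    (hH : ∀ i, signFlip (i₀, i) ∈ H) : H = ⊤ := by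
  refine H.eq_top_iff'.2 fun s => ?_
  have hs : s = ∏ i, if (s : α → ℤˣ) i = 1 then 1 else signFlip (i₀, i) := by
    have hi₀ : ∏ i, Pi.mulSingle i₀ ((s : α → ℤˣ) i) = (1 : α → ℤˣ) := by
      have := map_prod (MonoidHom.mulSingle (fun _ : α => ℤˣ) i₀) (s : α → ℤˣ) univ
      simpa [mem_evenSigns.1 s.2] using this.symm
    have hsplit : (s : α → ℤˣ) =
        ∏ i, Pi.mulSingle i₀ ((s : α → ℤˣ) i) * Pi.mulSingle i ((s : α → ℤˣ) i) := by
      rw [prod_mul_distrib, hi₀, one_mul, univ_prod_mulSingle]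
    refine Subtype.ext (hsplit.trans ?_)
    rw [Subgroup.val_finsetProd]
    refine prod_congr rfl fun i _ => ?_
    rcases Int.units_eq_one_or ((s : α → ℤˣ) i) with h | h <;> simp [h, signFlip]
  rw [hs]
  exact prod_mem fun i _ => by split_ifs <;> simp [hH]

lemma IsConnecting.closure_signFlip_eq_top [Nonempty α] {ι : Type*} {f : ι → α × α}
    (hf : IsConnecting f) : Subgroup.closure (Set.range fun t => signFlip (f t)) = ⊤ := by
  classical
  obtain ⟨i₀⟩ := ‹Nonempty α›
  set H := Subgroup.closure (Set.range fun t => signFlip (f t))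
  suffices ({i | signFlip (i₀, i) ∈ H} : Finset α) = univ from
    eq_top_of_forall_signFlip_mem i₀ (by simpa [eq_univ_iff_forall] using this)
  by_contra hS
  obtain ⟨t, ht⟩ := hf _ ⟨i₀, by simp [signFlip_self]⟩ hS
  have hedge : signFlip (f t) ∈ H := Subgroup.subset_closure ⟨t, rfl⟩
  refine ht ?_
  rw [mem_filter_univ, mem_filter_univ, ← signFlip_mul_signFlip i₀ (f t).1 (f t).2,
    H.mul_mem_cancel_right hedge]

end SignFlips

variable {d : ℕ}

lemma pairUniform_real_mem_iff_mem_le [Nontrivial (Fin d)] {S : Finset (Fin d)} (hS : 2 * #S ≤ d) :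
    (pairUniform d).real {p | p.1 ∈ S ↔ p.2 ∈ S} ≤ exp (-(#S : ℝ) / ((d : ℝ) - 1)) := by
  have hd : 2 ≤ d := Fin.nontrivial_iff_two_le.1 ‹_›
  have hpairs : (univ.offDiag : Finset (Fin d × Fin d)) ∩ ({p | p.1 ∈ S ↔ p.2 ∈ S} : Finset _) =
      S.offDiag ∪ Sᶜ.offDiag := by
    ext p
    simp
    tauto
  have hdisj : Disjoint S.offDiag Sᶜ.offDiag := by
    simp +contextual [disjoint_left]
  have hprob : (pairUniform d).real {p | p.1 ∈ S ↔ p.2 ∈ S} =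
      1 - 2 * #S * (d - #S) / (d * (d - 1)) := by
    have hd₁ : (d : ℝ) - 1 ≠ 0 := sub_ne_zero.2 (by exact_mod_cast (by lia : d ≠ 1))
    rw [measureReal_def, pairUniform_eq_uniformOn, ← coe_filter_univ,
      ProbabilityTheory.uniformOn_apply_finset, hpairs, card_union_of_disjoint hdisj]
    simp only [offDiag_card, card_compl, card_univ, Fintype.card_fin,
      ENNReal.toReal_div, ENNReal.toReal_natCast]
    rw [Nat.cast_add, Nat.cast_sub (Nat.le_mul_self _), Nat.cast_sub (Nat.le_mul_self _),
      Nat.cast_sub (Nat.le_mul_self _)]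
    push_cast [Nat.cast_sub (show #S ≤ d by lia)]
    field_simp
    ring
  have hcross : (#S : ℝ) / (d - 1) ≤ 2 * #S * (d - #S) / (d * (d - 1)) := by
    have hd' : (2 : ℝ) ≤ d := by exact_mod_cast hd
    have hS' : 2 * (#S : ℝ) ≤ d := by exact_mod_cast hS
    rw [div_le_div_iff₀ (by linarith) (mul_pos (by linarith) (by linarith))]
    nlinarith [mul_nonneg (Nat.cast_nonneg (α := ℝ) #S) (sub_nonneg.2 (one_le_two.trans hd'))]
  rw [hprob, neg_div]
  linarith [one_sub_le_exp_neg ((#S : ℝ) / (d - 1))]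

lemma exists_mem_iff_mem_of_not_isConnecting {ι α : Type*} [Fintype α] {f : ι → α × α}
    (hf : ¬IsConnecting f) :
    ∃ S : Finset α, S.Nonempty ∧ 2 * #S ≤ Fintype.card α ∧ ∀ t, (f t).1 ∈ S ↔ (f t).2 ∈ S := by
  classical
  simp only [IsConnecting, not_forall, not_exists, not_not] at hf
  obtain ⟨S, hS, hS', hf⟩ := hf
  rcases le_total (2 * #S) (Fintype.card α) with h | h
  · exact ⟨S, hS, h, hf⟩
  · refine ⟨Sᶜ, nonempty_iff_ne_empty.2 (by simpa using hS'), ?_, fun t => ?_⟩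
    · rw [card_compl]
      lia
    · rw [mem_compl, mem_compl, hf]

theorem measureReal_pi_not_isConnecting_le [Nontrivial (Fin d)] (T : ℕ) :
    (Measure.pi fun _ : Fin T => pairUniform d).real {f | ¬IsConnecting f} ≤
      (1 + exp (-(T : ℝ) / ((d : ℝ) - 1))) ^ d - 1 := by
  set x := exp (-(T : ℝ) / ((d : ℝ) - 1)) with hx
  let small : Finset (Finset (Fin d)) := {S | S.Nonempty ∧ 2 * #S ≤ d}
  let uncrossed (S : Finset (Fin d)) : Set (Fin T → Fin d × Fin d) :=
    Set.univ.pi fun _ => {p | p.1 ∈ S ↔ p.2 ∈ S}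
  have hsub : {f : Fin T → Fin d × Fin d | ¬IsConnecting f} ⊆ ⋃ S ∈ small, uncrossed S := by
    intro f hf
    obtain ⟨S, hS, hcard, hfS⟩ := exists_mem_iff_mem_of_not_isConnecting hf
    rw [Fintype.card_fin] at hcard
    exact Set.mem_biUnion (by simp [small, hS, hcard]) fun t _ => hfS t
  have huncrossed (S) (hS : S ∈ small) :
      (Measure.pi fun _ : Fin T => pairUniform d).real (uncrossed S) ≤ x ^ #S := by
    rw [measureReal_def, Measure.pi_pi, prod_const, card_univ, Fintype.card_fin,
      ENNReal.toReal_pow, ← measureReal_def]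
    calc _ ≤ exp (-(#S : ℝ) / ((d : ℝ) - 1)) ^ T := by
          gcongr
          exact pairUniform_real_mem_iff_mem_le (mem_filter_univ S |>.1 hS).2
      _ = x ^ #S := by
          rw [hx, ← exp_nat_mul, ← exp_nat_mul]
          ring_nf
  calc _ ≤ (Measure.pi fun _ : Fin T => pairUniform d).real (⋃ S ∈ small, uncrossed S) :=
        measureReal_mono hsub (measure_ne_top _ _)
    _ ≤ ∑ S ∈ small, x ^ #S := (measureReal_biUnion_finset_le _ _).trans (sum_le_sum huncrossed)
    _ ≤ ∑ S ∈ univ.erase ∅, x ^ #S := by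
        refine sum_le_sum_of_subset_of_nonneg (fun S hS => ?_) fun _ _ _ => by positivity
        exact mem_erase.2 ⟨((mem_filter_univ S).1 hS).1.ne_empty, mem_univ S⟩
    _ = (1 + x) ^ d - 1 := by
        have := sum_pow_mul_eq_add_pow x 1 (univ : Finset (Fin d))
        simp only [one_pow, mul_one, powerset_univ, card_univ, Fintype.card_fin] at this
        rw [sum_erase_eq_sub (mem_univ _), this, card_empty, pow_zero, add_comm]

lemma one_add_pow_sub_one_le_div {x : ℝ} (hx : 0 ≤ x) {n : ℕ} (hnx : n * x < 1) :
    (1 + x) ^ n - 1 ≤ n * x / (1 - n * x) :=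
  calc (1 + x) ^ n - 1 ≤ exp (n * x) - 1 := by
        rw [exp_nat_mul, add_comm]
        gcongr
        exact add_one_le_exp x
    _ ≤ 1 / (1 - n * x) - 1 := by
        gcongr
        exact exp_bound_div_one_sub_of_interval (by positivity) hnx
    _ = n * x / (1 - n * x) := by
        rw [div_sub_one (sub_pos.2 hnx).ne', sub_sub_cancel]

end Connectivity

section TotalVariation

variable {X : Type*} [MeasurableSpace X] {μ ν : Measure X}

lemma tvDist_le_of_forall_isTestFunction {c : ℝ}
    (h : ∀ Φ : X → ℝ, IsTestFunction Φ → |∫ x, Φ x ∂μ - ∫ x, Φ x ∂ν| ≤ c) : tvDist μ ν ≤ c := by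
  have : Nonempty {s : Set X // MeasurableSet s} := ⟨⟨∅, .empty⟩⟩
  refine ciSup_le fun s => ?_
  have := h _ (isTestFunction_indicator_one s.2)
  rwa [integral_indicator_one s.2, integral_indicator_one s.2] at this

lemma tvDist_le_one [IsProbabilityMeasure μ] [IsProbabilityMeasure ν] : tvDist μ ν ≤ 1 :=
  tvDist_le_of_forall_isTestFunction fun _ hΦ =>
    abs_sub_le_of_nonneg_of_le (hΦ.integral_mem_Icc μ).1 (hΦ.integral_mem_Icc μ).2
      (hΦ.integral_mem_Icc ν).1 (hΦ.integral_mem_Icc ν).2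

end TotalVariation

section Symmetrization

open Equiv Finset
open scoped BigOperators InnerProductSpace

variable {d : ℕ} {Φ : Matrix (Fin d) (Fin d) ℝ → ℝ}

/-- The average of a function of a matrix over all even sign changes of the rows. -/
def signAverage (Φ : Matrix (Fin d) (Fin d) ℝ → ℝ) (M : Matrix (Fin d) (Fin d) ℝ) : ℝ :=
  𝔼 s : evenSigns (Fin d), Φ (signedPermMatrix s 1 * M)

lemma isTestFunction_signAverage (hΦ : IsTestFunction Φ) : IsTestFunction (signAverage Φ) :=
  .expect fun _ => hΦ.comp (by fun_prop)

lemma signAverage_sign_mul (s : evenSigns (Fin d)) (M : Matrix (Fin d) (Fin d) ℝ) :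
    signAverage Φ (signedPermMatrix s 1 * M) = signAverage Φ M :=
  Fintype.expect_equiv (Equiv.mulRight s) _ _ fun t => by
    rw [coe_mulRight, Subgroup.coe_mul, ← signedPermMatrix_one_mul, mul_assoc]

lemma signAverage_signedPermMatrix_mul_sign_mul (t : Fin d → ℤˣ) (τ : Perm (Fin d))
    (s : evenSigns (Fin d)) (M : Matrix (Fin d) (Fin d) ℝ) :
    signAverage Φ (signedPermMatrix t τ * (signedPermMatrix s 1 * M)) =
      signAverage Φ (signedPermMatrix t τ * M) := by
  have hs : (s : Fin d → ℤˣ) ∘ ⇑τ⁻¹ ∈ evenSigns (Fin d) :=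
    mem_evenSigns.2 ((Equiv.prod_comp τ⁻¹ _).trans (mem_evenSigns.1 s.2))
  have hcomm : signedPermMatrix t τ * signedPermMatrix s 1 =
      signedPermMatrix (s ∘ ⇑τ⁻¹) 1 * signedPermMatrix t τ := by
    rw [signedPermMatrix_mul, signedPermMatrix_one_mul, mul_one, mul_comm]
  rw [← mul_assoc, hcomm, mul_assoc]
  exact signAverage_sign_mul ⟨_, hs⟩ _

variable [Nontrivial (Fin d)] {q : Measure ℝ} [IsProbabilityMeasure q] {T : ℕ}

lemma abs_sum_subproductLaw_signFlip_sub_expect_le (f : Fin T → Fin d × Fin d)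
    {φ : evenSigns (Fin d) → ℝ} (hφ : ∀ s, φ s ∈ Set.Icc 0 1) :
    |∑ s, subproductLaw (fun t => signFlip (f t)) s * φ s - 𝔼 s, φ s| ≤
      {f | ¬IsConnecting f}.indicator 1 f := by
  by_cases hf : IsConnecting f
  · simp [hf, subproductLaw_apply_of_closure_eq_top (fun t => signFlip_mul_self (f t))
      hf.closure_signFlip_eq_top, Fintype.expect_eq_sum_div_card, ← mul_sum, div_eq_inv_mul]
  · have hsum := (convex_Icc (0 : ℝ) 1).sum_mem (fun s _ => subproductLaw_nonneg _ s)
      (sum_subproductLaw fun t => signFlip (f t)) fun s _ => hφ s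
    have hexpect := expect_mem_Icc hφ
    simpa [hf] using abs_sub_le_of_nonneg_of_le hsum.1 hsum.2 hexpect.1 hexpect.2

lemma abs_integral_kacMatrix_sub_integral_signAverage_le
    (hneg : Measure.map (fun θ => mod2pi (-θ)) q = q)
    (hquarter : Measure.map (fun θ => mod2pi (θ + π / 2)) q = q)
    (hdT : d * exp (-(T : ℝ) / ((d : ℝ) - 1)) < 1) (hΦ : IsTestFunction Φ) :
    |∫ ω, Φ (kacMatrix ω) ∂Measure.pi (fun _ : Fin T => qKacParam d q) -
        ∫ ω, signAverage Φ (kacMatrix ω) ∂Measure.pi (fun _ : Fin T => qKacParam d q)| ≤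
      d * exp (-(T : ℝ) / ((d : ℝ) - 1)) / (1 - d * exp (-(T : ℝ) / ((d : ℝ) - 1))) := by
  have hcompare := abs_integral_kacMatrix_sub_expect_le (T := T) (a := signFlip)
    (A := fun s : evenSigns (Fin d) => signedPermMatrix s 1) hneg (map_mod2pi_add_pi hquarter)
    (fun i j hij => rotM_pi hij ▸ signedPermMatrix_mem _ _) (fun s => signedPermMatrix_mem _ _)
    signedPermMatrix_one_one hΦ
    (fun s p hp M => by rw [rotM_pi hp, signedPermMatrix_one_mul, Subgroup.coe_mul])
    (fun f φ hφ => abs_sum_subproductLaw_signFlip_sub_expect_le f hφ)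
  rw [← integral_expect fun s => (hΦ.comp (by fun_prop)).integrable _,
    integral_indicator_one (Set.toFinite _).measurableSet] at hcompare
  exact hcompare.trans <| (measureReal_pi_not_isConnecting_le T).trans <|
    one_add_pow_sub_one_le_div (exp_pos _).le hdT

lemma abs_integral_kacMatrix_sub_expect_signedPermMatrix_le (i₀ : Fin d)
    (hneg : Measure.map (fun θ => mod2pi (-θ)) q = q)
    (hquarter : Measure.map (fun θ => mod2pi (θ + π / 2)) q = q)
    (hdT : 24 ≤ (T : ℝ) / d - 3 * log d) (hΦ : IsTestFunction Φ)
    (hsign : ∀ (s : evenSigns (Fin d)) M, Φ (signedPermMatrix s 1 * M) = Φ M) :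
    |∫ ω, Φ (kacMatrix ω) ∂Measure.pi (fun _ : Fin T => qKacParam d q) -
        𝔼 τ, ∫ ω, Φ (signedPermMatrix (signLift i₀ τ) τ * kacMatrix ω)
          ∂Measure.pi (fun _ : Fin T => qKacParam d q)| ≤
      (d : ℝ) ^ ((1 : ℝ) / 2) * exp (-(T : ℝ) / (6 * d)) := by
  refine (abs_integral_kacMatrix_sub_expect_le (a := fun p => swap p.1 p.2)
    (A := fun τ : Perm (Fin d) => signedPermMatrix (signLift i₀ τ) τ) hneg hquarter
    (fun i j hij => rotM_half_pi hij ▸ signedPermMatrix_mem _ _)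
    (fun τ => signedPermMatrix_mem _ _) ?_ hΦ (fun τ p hp M => ?_) fun f φ hφ => ?_).trans
      (integral_sqrt_subproductLaw_swap_le hdT)
  · simp [signLift, signedPermMatrix_one_one]
  · obtain ⟨s, hs⟩ := exists_evenSigns_signedPermMatrix_mul_swap i₀ τ hp
    rw [hs, mul_assoc, hsign]
  · simpa [Fintype.card_perm] using abs_sum_mul_sub_expect_le (sum_subproductLaw _) hφ

/-- The law of `Σ Q_T D_ξ`, for a uniform signed permutation matrix `Σ` of determinant `1`, the
`q`-Kac walk `Q_T`, and uniform even signs `ξ`, all independent. -/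
def symmetrizedKacMeasure (d T : ℕ) (q : Measure ℝ) : Measure (Matrix (Fin d) (Fin d) ℝ) :=
  Measure.map (fun z : Matrix (Fin d) (Fin d) ℝ × ((Fin T → (Fin d × Fin d) × ℝ) × (Fin d → ℝ)) =>
      z.1 * kacMatrix z.2.1 * Matrix.diagonal z.2.2)
    ((signedPermSO d).prod ((Measure.pi fun _ : Fin T => qKacParam d q).prod (signMeasure d)))

instance : IsProbabilityMeasure (symmetrizedKacMeasure d T q) :=
  Measure.isProbabilityMeasure_map (by fun_prop)

instance : IsProbabilityMeasure (qKacMeasure d T q) :=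
  Measure.isProbabilityMeasure_map (by fun_prop)

lemma integral_mul_kacMatrix_mul_diagonal (hneg : Measure.map (fun θ => mod2pi (-θ)) q = q)
    (hΦ : IsTestFunction Φ) (B : Matrix (Fin d) (Fin d) ℝ) :
    ∫ z, Φ (B * kacMatrix z.1 * Matrix.diagonal z.2)
        ∂(Measure.pi fun _ : Fin T => qKacParam d q).prod (signMeasure d) =
      𝔼 s : evenSigns (Fin d), ∫ ω, Φ (B * (signedPermMatrix s 1 * kacMatrix ω))
        ∂Measure.pi fun _ : Fin T => qKacParam d q := by
  rw [integral_prod_symm _ ((hΦ.comp (by fun_prop)).integrable _), integral_signMeasure]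
  refine expect_congr rfl fun s _ => ?_
  simp only [← signedPermMatrix_one_right, mul_assoc]
  exact integral_kacMatrix_mul_of_mem hneg (signedPermMatrix_mem _ _)
    (Φ := fun M => Φ (B * M)) (hΦ.comp (by fun_prop)) T

lemma integral_symmetrizedKacMeasure (i₀ : Fin d)
    (hneg : Measure.map (fun θ => mod2pi (-θ)) q = q) (hΦ : IsTestFunction Φ) :
    ∫ M, Φ M ∂symmetrizedKacMeasure d T q =
      𝔼 τ, ∫ ω, signAverage Φ (signedPermMatrix (signLift i₀ τ) τ * kacMatrix ω)
        ∂Measure.pi fun _ : Fin T => qKacParam d q := by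
  set ν := Measure.pi fun _ : Fin T => qKacParam d q
  have hsign (τ : Perm (Fin d)) (t : evenSigns (Fin d)) :
      𝔼 s : evenSigns (Fin d), ∫ ω, Φ (signedPermMatrix (s.1 * signLift i₀ τ) τ *
          (signedPermMatrix t 1 * kacMatrix ω)) ∂ν =
        ∫ ω, signAverage Φ (signedPermMatrix (signLift i₀ τ) τ * kacMatrix ω) ∂ν := by
    rw [← integral_expect fun s => (hΦ.comp (by fun_prop)).integrable ν]
    refine integral_congr_ae (.of_forall fun ω => ?_)
    simpa only [signAverage, ← signedPermMatrix_one_mul, mul_assoc] using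
      signAverage_signedPermMatrix_mul_sign_mul (signLift i₀ τ) τ t (kacMatrix ω)
  rw [symmetrizedKacMeasure, integral_map (by fun_prop) hΦ.measurable.aestronglyMeasurable,
    integral_prod _ ((hΦ.comp (by fun_prop)).integrable _), integral_signedPermSO i₀]
  refine expect_congr rfl fun τ _ => ?_
  simp only [integral_mul_kacMatrix_mul_diagonal hneg hΦ]
  rw [expect_comm]
  simp only [hsign, Fintype.expect_const, ν]

theorem tvDist_symmetrizedKacMeasure_le (hneg : Measure.map (fun θ => mod2pi (-θ)) q = q)
    (hquarter : Measure.map (fun θ => mod2pi (θ + π / 2)) q = q)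
    (hsigns : d * exp (-(T : ℝ) / ((d : ℝ) - 1)) < 1)
    (hperms : 24 ≤ (T : ℝ) / d - 3 * log d) :
    tvDist (qKacMeasure d T q) (symmetrizedKacMeasure d T q) ≤
      d * exp (-(T : ℝ) / ((d : ℝ) - 1)) / (1 - d * exp (-(T : ℝ) / ((d : ℝ) - 1))) +
        (d : ℝ) ^ ((1 : ℝ) / 2) * exp (-(T : ℝ) / (6 * d)) := by
  obtain ⟨i₀⟩ : Nonempty (Fin d) := inferInstance
  refine tvDist_le_of_forall_isTestFunction fun Φ hΦ => ?_
  rw [qKacMeasure, integral_map (by fun_prop) hΦ.measurable.aestronglyMeasurable,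
    integral_symmetrizedKacMeasure i₀ hneg hΦ]
  exact (abs_sub_le _ _ _).trans <| add_le_add
    (abs_integral_kacMatrix_sub_integral_signAverage_le hneg hquarter hsigns hΦ)
    (abs_integral_kacMatrix_sub_expect_signedPermMatrix_le i₀ hneg hquarter hperms
      (isTestFunction_signAverage hΦ) signAverage_sign_mul)

end Symmetrization

lemma one_le_exp_four_mul_of_lt {d : ℕ} {x : ℝ} (hd : d ≠ 0) (hx : x / d - 3 * log d < 24) :
    1 ≤ exp 4 * ((d : ℝ) ^ ((1 : ℝ) / 2) * exp (-x / (6 * d))) := by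
  have hd' : (0 : ℝ) < d := by positivity
  rw [rpow_def_of_pos hd', ← exp_add, ← exp_add, one_le_exp_iff]
  have : -x / (6 * d) = -(x / d) / 6 := by field_simp
  linarith

theorem symmetric_kac_signed_perm_invariance_general {d T : ℕ} (hd : 2 ≤ d) {q : Measure ℝ}
    [IsProbabilityMeasure q] (hneg : Measure.map (fun θ => mod2pi (-θ)) q = q)
    (hquarter : Measure.map (fun θ => mod2pi (θ + π / 2)) q = q)
    (hdT : d * exp (-(T : ℝ) / ((d : ℝ) - 1)) < 1) :
    tvDist (qKacMeasure d T q) (symmetrizedKacMeasure d T q) ≤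
      d * exp (-(T : ℝ) / ((d : ℝ) - 1)) / (1 - d * exp (-(T : ℝ) / ((d : ℝ) - 1))) +
        exp 4 * ((d : ℝ) ^ ((1 : ℝ) / 2) * exp (-(T : ℝ) / (6 * d))) := by
  have : Nontrivial (Fin d) := Fin.nontrivial_iff_two_le.2 hd
  rcases le_or_gt 24 ((T : ℝ) / d - 3 * log d) with hperms | hperms
  · refine (tvDist_symmetrizedKacMeasure_le hneg hquarter hdT hperms).trans ?_
    exact add_le_add_right (le_mul_of_one_le_left (by positivity) (one_le_exp (by norm_num))) _
  · have hbound := one_le_exp_four_mul_of_lt (by lia : d ≠ 0) hperms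
    exact tvDist_le_one.trans <| hbound.trans <|
      le_add_of_nonneg_left (div_nonneg (by positivity) (sub_nonneg.2 hdT.le))

/-- **Lemma 2.6**: for a symmetric `q`-Kac walk, the law of `Q_T` is close in total
variation to the law of `Σ Q_T D_ξ`, where `Σ` is a uniform signed permutation matrix in
`SO(d)` and `ξ` a uniform sign vector conditioned on having product `1`, all independent. -/
theorem symmetric_kac_signed_perm_invariance :
    ∃ C : ℝ, 0 < C ∧
      ∀ (d T : ℕ), 10 ≤ d →
      ∀ (q : Measure ℝ), IsProbabilityMeasure q →
      q (Set.Ico 0 (2 * Real.pi))ᶜ = 0 →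
      Measure.map (fun θ => mod2pi (-θ)) q = q →
      Measure.map (fun θ => mod2pi (θ + Real.pi / 2)) q = q →
      (d : ℝ) * Real.exp (-(T : ℝ) / ((d : ℝ) - 1)) < 1 →
      tvDist (qKacMeasure d T q)
          (Measure.map
            (fun z : Matrix (Fin d) (Fin d) ℝ ×
                ((Fin T → (Fin d × Fin d) × ℝ) × (Fin d → ℝ)) =>
              z.1 * kacMatrix z.2.1 * Matrix.diagonal z.2.2)
            ((signedPermSO d).prod
              ((Measure.pi fun _ : Fin T => qKacParam d q).prod (signMeasure d)))) ≤
        2 * (d : ℝ) * Real.exp (-(T : ℝ) / ((d : ℝ) - 1)) /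
            (1 - (d : ℝ) * Real.exp (-(T : ℝ) / ((d : ℝ) - 1))) +
          C * ((d : ℝ) ^ ((1 : ℝ) / 2) * Real.exp (-(T : ℝ) / (6 * d)) +
            ((d.factorial : ℝ)) ^ ((1 : ℝ) / 2) *
              ((Real.sqrt 5 - 1) / 2) ^ ((T : ℝ) / 2)) := by
  refine ⟨exp 4, exp_pos 4, fun d T hd q _ _ hneg hquarter hdT => ?_⟩
  refine (symmetric_kac_signed_perm_invariance_general (by lia) hneg hquarter hdT).trans ?_
  have hgolden : 0 ≤ (√5 - 1) / 2 :=
    div_nonneg (sub_nonneg.2 (one_le_sqrt.2 (by norm_num))) zero_le_two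
  refine add_le_add (div_le_div_of_nonneg_right ?_ (sub_nonneg.2 hdT.le))
    (mul_le_mul_of_nonneg_left (le_add_of_nonneg_right ?_) (exp_pos 4).le)
  · rw [mul_assoc]
    exact le_mul_of_one_le_left (by positivity) one_le_two
  · exact mul_nonneg (by positivity) (rpow_nonneg hgolden _)

end KacJL
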